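/- (Corollary 4.2) Assume the integrality condition on (μ,ν). For ϑ, φ ∈ [0,π] with cos ϑ + cos φ > 0 and −1 < t < 1, define I_{μ,ν}(t,ϑ,φ) = ∫₀^∞ Ĩ_{μ/2}(tx/(1−t)) K̃_{ν/2}(x/(1−t)) J̃_{μ/2}(ax) J̃_{ν/2}(bx) x^{μ+ν+1} dx, where a = sin ϑ/(cos ϑ + cos φ) and b = sin φ/(cos ϑ + cos φ). Then (1−t)^{−(μ+ν+2)/2} ((cos ϑ + cos φ)/2)^{−(μ+ν+2)/2} I_{μ,ν}(t,ϑ,φ) = (2^{2(μ+ν)}/π) Σ_{j=0}^∞ (−1)^j (Γ(j+(μ−ν+2)/2)/Γ(j+μ+1)) C̃_j^{(μ+1)/2}(cos ϑ) C̃_{j+(μ−ν)/2}^{(ν+1)/2}(cos φ) t^j, the series converging for −1 < t < 1. -/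

import Mathlib

open MeasureTheory Real Filter Set Metric

noncomputable section

/-- Normalized Bessel function of the first kind: `J̃_α(x) = (x/2)^{-α} J_α(x)`,
given by its (entire) power series. -/
def besselJt (α x : ℝ) : ℝ :=
  ∑' m : ℕ, (-1) ^ m / (m.factorial * Real.Gamma (m + α + 1)) * (x / 2) ^ (2 * m)

/-- Bessel function of the first kind `J_α`. -/
def besselJ (α x : ℝ) : ℝ :=
  ∑' m : ℕ, (-1) ^ m / (m.factorial * Real.Gamma (m + α + 1)) * (x / 2) ^ (2 * (m : ℝ) + α)

/-- Normalized modified Bessel function `Ĩ_α(x) = (x/2)^{-α} I_α(x)`,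
given by its (entire, even) power series. -/
def besselIt (α x : ℝ) : ℝ :=
  ∑' m : ℕ, (x / 2) ^ (2 * m) / (m.factorial * Real.Gamma (m + α + 1))

/-- Modified Bessel function of the first kind `I_α`. -/
def besselI (α x : ℝ) : ℝ :=
  ∑' m : ℕ, (x / 2) ^ (2 * (m : ℝ) + α) / (m.factorial * Real.Gamma (m + α + 1))

/-- Modified Bessel function of the second kind,
`K_α(x) = lim_{β→α} (π/2)(I_{−β}(x) − I_β(x))/sin(βπ)`. -/
def besselK (α x : ℝ) : ℝ :=
  limUnder (nhdsWithin α {α}ᶜ) fun β =>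
    Real.pi / 2 * (besselI (-β) x - besselI β x) / Real.sin (β * Real.pi)

/-- Normalized K-Bessel function `K̃_α(x) = (x/2)^{-α} K_α(x)`. -/
def besselKt (α x : ℝ) : ℝ := (x / 2) ^ (-α) * besselK α x

/-- Normalized Gegenbauer polynomial `C̃_n^λ = Γ(λ) C_n^λ`, where `C_n^λ` is defined via the
generating function `(1 − 2xt + t²)^{−λ} = Σ_{n≥0} C_n^λ(x) tⁿ`; explicitly,
`C̃_n^λ(x) = Σ_{k=0}^{⌊n/2⌋} (−1)^k Γ(λ+n−k)/(k!(n−2k)!) (2x)^{n−2k}`.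
This expression also gives the limit value `C̃_n^0 = lim_{λ→0+} Γ(λ) C_n^λ` for `n ≥ 1`. -/
def gegenbauerCt (n : ℕ) (l x : ℝ) : ℝ :=
  ∑ k ∈ Finset.range (n / 2 + 1),
    (-1) ^ k * Real.Gamma (l + n - k) / (k.factorial * (n - 2 * k).factorial)
      * (2 * x) ^ (n - 2 * k)

/-- Laguerre polynomial `L_n^μ(x) = Σ_{k=0}^n (−1)^k binom(n+μ, n−k) x^k/k!`
(with nonnegative integer parameter `μ`). -/
def laguerreL (n μ : ℕ) (x : ℝ) : ℝ :=
  ∑ k ∈ Finset.range (n + 1),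
    (-1) ^ k * (Nat.choose (n + μ) (n - k)) * x ^ k / k.factorial

/-- The Euler operator `θ = x d/dx`. -/
def eulerOp (u : ℝ → ℝ) : ℝ → ℝ := fun x => x * deriv u x

/-- `(θ+c)(θ+c+ν)u − x² u`, i.e. the operator `Q_ν(θ+c)` applied to `u`. -/
def besselQ (ν c : ℝ) (u : ℝ → ℝ) : ℝ → ℝ := fun x =>
  eulerOp (fun y => eulerOp u y + (c + ν) * u y) x
    + c * (eulerOp u x + (c + ν) * u x) - x ^ 2 * u x

/-- The fourth order differential operator
`D_{μ,ν} = x^{−2}((θ+μ)(θ+μ+ν) − x²)(θ(θ+ν) − x²)`. -/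
def Dop (μ ν : ℝ) (u : ℝ → ℝ) : ℝ → ℝ := fun x =>
  besselQ ν μ (besselQ ν 0 u) x / x ^ 2

/-- The generating function
`G^{μ,ν}(t,x) = (1−t)^{−(μ+ν+2)/2} Ĩ_{μ/2}(tx/(1−t)) K̃_{ν/2}(x/(1−t))`. -/
def genFun (μ ν t x : ℝ) : ℝ :=
  (1 - t) ^ (-(μ + ν + 2) / 2) * besselIt (μ / 2) (t * x / (1 - t))
    * besselKt (ν / 2) (x / (1 - t))

/-- The eigenfunctions `Λ_j^{μ,ν}`, defined as the Taylor coefficients in `t` at `t = 0` of the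
generating function `G^{μ,ν}(t,x) = Σ_{j≥0} Λ_j^{μ,ν}(x) t^j`. -/
def LambdaF (μ ν : ℝ) (j : ℕ) (x : ℝ) : ℝ :=
  iteratedDeriv j (fun t => genFun μ ν t x) 0 / j.factorial

/-- The integrality condition: `μ ≥ ν ≥ −1` are integers of the same parity,
not both equal to `−1`. -/
def IntCond (μ ν : ℤ) : Prop :=
  -1 ≤ ν ∧ ν ≤ μ ∧ Even (μ - ν) ∧ ¬(μ = -1 ∧ ν = -1)

end

/-!
Write `E_a(w) = ∑ w ^ m / (m! Γ(m + a + 1))`, `μ = 2a` and `ν = 2b`. For small `φ`, the product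
`K̃_b J̃_b` is an integral over `s > 0` of `exp(-s - z / s)` times elementary and Bessel functions
of `s` alone. After exchanging the integrals, the remaining integral of `Ĩ_a J̃_a` is Weber's
second exponential integral, and what is left is `∫₀^∞ w ^ (a + b) exp(-(cos φ + t cos ϑ) w)
E_a(-(t w sin ϑ)² / 4) E_b(-(w sin φ)² / 4) dw`. Here `exp(-t w cos ϑ) E_a(-(t w sin ϑ)² / 4)`
generates the Gegenbauer polynomials in `cos ϑ`, and the Laplace transform of `w ^ (a + b + j)
E_b(-(w sin φ)² / 4)` is a Gegenbauer polynomial in `cos φ` because `a - b` is a natural number.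
Both sides are analytic in `φ` as long as `cos ϑ + cos φ > 0`, which removes the smallness
assumption.
-/

/-! ### The Bessel–Clifford function -/

section BesselClifford

variable {𝕜 : Type*} [RCLike 𝕜]

/-- The coefficient `1 / (m! Γ(m + a + 1))` of the Bessel–Clifford function. Since `Real.Gamma`
vanishes at its poles, this is also the value of the entire function `1 / Γ` there. -/
noncomputable def cliffordCoeff (a : ℝ) (m : ℕ) : ℝ := (m.factorial * Real.Gamma (m + a + 1))⁻¹

/-- The Bessel–Clifford function `E_a(w) = ∑ w ^ m / (m! Γ(m + a + 1))`, of a real or complex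
argument: `J̃_a(x) = E_a(-x² / 4)` and `Ĩ_a(x) = E_a(x² / 4)`. -/
noncomputable def besselClifford (a : ℝ) (w : 𝕜) : 𝕜 := ∑' m : ℕ, (cliffordCoeff a m : 𝕜) * w ^ m

theorem cliffordCoeff_pos {a : ℝ} (ha : -1 < a) (m : ℕ) : 0 < cliffordCoeff a m := by
  have : 0 < Real.Gamma (m + a + 1) :=
    Real.Gamma_pos_of_pos (by linarith [m.cast_nonneg (α := ℝ)])
  unfold cliffordCoeff
  positivity

theorem inv_Gamma_eq_mul_inv_Gamma_add_one (s : ℝ) :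
    (Real.Gamma s)⁻¹ = s * (Real.Gamma (s + 1))⁻¹ := by
  rcases eq_or_ne s 0 with rfl | hs
  · simp
  · rw [Real.Gamma_add_one hs, mul_inv, mul_inv_cancel_left₀ hs]

theorem cliffordCoeff_eq_mul_add_one (a : ℝ) (m : ℕ) :
    cliffordCoeff a m = (m + a + 1) * cliffordCoeff (a + 1) m := by
  rw [cliffordCoeff, mul_inv, inv_Gamma_eq_mul_inv_Gamma_add_one, cliffordCoeff, mul_inv,
    show (m : ℝ) + (a + 1) + 1 = m + a + 1 + 1 by ring]
  ring

theorem succ_mul_cliffordCoeff_succ (a : ℝ) (m : ℕ) :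
    (m + 1) * cliffordCoeff a (m + 1) = cliffordCoeff (a + 1) m := by
  rw [cliffordCoeff, cliffordCoeff, Nat.factorial_succ, mul_inv, mul_inv]
  push_cast
  rw [show (m : ℝ) + 1 + a + 1 = m + (a + 1) + 1 by ring]
  field

theorem cliffordCoeff_zero (a : ℝ) : cliffordCoeff a 0 = (Real.Gamma (a + 1))⁻¹ := by
  simp [cliffordCoeff]

theorem summable_norm_cliffordCoeff_mul_pow (a : ℝ) (w : 𝕜) :
    Summable fun m : ℕ ↦ ‖(cliffordCoeff a m : 𝕜) * w ^ m‖ := by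
  have hrad := Complex.radius_regularizedHGFunSeries_eq_top (a := 0) (b := {(a + 1 : ℂ)}) (by simp)
  refine (FormalMultilinearSeries.summable_norm_mul_pow _ (r := ‖w‖₊)
    (hrad ▸ ENNReal.coe_lt_top)).congr fun m ↦ ?_
  rw [FormalMultilinearSeries.norm_apply_eq_norm_coef, Complex.regularizedHGFunSeries_coeff,
    norm_mul, norm_pow, RCLike.norm_ofReal, ← Real.norm_eq_abs, ← Complex.norm_real, coe_nnnorm]
  congr 2
  simp [Complex.regularizedHGFunCoeff, cliffordCoeff, ← Complex.Gamma_ofReal, mul_comm,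
    show (m : ℂ) + a + 1 = a + 1 + m by ring]

theorem hasSum_besselClifford (a : ℝ) (w : 𝕜) :
    HasSum (fun m : ℕ ↦ (cliffordCoeff a m : 𝕜) * w ^ m) (besselClifford a w) :=
  (summable_norm_cliffordCoeff_mul_pow a w).of_norm.hasSum

theorem besselClifford_zero (a : ℝ) : besselClifford a (0 : ℝ) = (Real.Gamma (a + 1))⁻¹ := by
  rw [besselClifford, tsum_eq_single 0 fun m hm ↦ by simp [hm], cliffordCoeff_zero]
  simp

theorem ofReal_besselClifford (a x : ℝ) :
    ((besselClifford a x : ℝ) : ℂ) = besselClifford a (x : ℂ) := by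
  simp [besselClifford, Complex.ofReal_tsum]

theorem besselClifford_pos {a : ℝ} (ha : -1 < a) {x : ℝ} (hx : 0 ≤ x) : 0 < besselClifford a x :=
  (hasSum_besselClifford a x).summable.tsum_pos
    (fun m ↦ mul_nonneg (cliffordCoeff_pos ha m).le (pow_nonneg hx m)) 0
    (by simpa using cliffordCoeff_pos ha 0)

theorem hasDerivAt_besselClifford (a : ℝ) (w : 𝕜) :
    HasDerivAt (besselClifford a) (besselClifford (a + 1) w) w := by
  have hbound : ∀ m : ℕ, ∀ y ∈ ball (0 : 𝕜) (‖w‖ + 1),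
      ‖(cliffordCoeff a m : 𝕜) * (m * y ^ (m - 1))‖
        ≤ ‖cliffordCoeff a m * (m * (‖w‖ + 1) ^ (m - 1))‖ := by
    intro m y hy
    rw [mem_ball_zero_iff] at hy
    simp only [norm_mul, norm_pow, RCLike.norm_ofReal, RCLike.norm_natCast,
      Real.norm_eq_abs, abs_of_pos (show 0 < ‖w‖ + 1 by positivity)]
    gcongr
  have hsucc : ∀ m : ℕ, ∀ r : 𝕜, (cliffordCoeff a (m + 1) : 𝕜) * (((m + 1 : ℕ) : 𝕜) * r ^ m)
      = (cliffordCoeff (a + 1) m : 𝕜) * r ^ m := by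
    intro m r
    rw [← succ_mul_cliffordCoeff_succ]
    push_cast
    ring
  have hsum : Summable fun m : ℕ ↦ ‖cliffordCoeff a m * (m * (‖w‖ + 1) ^ (m - 1))‖ := by
    rw [← summable_nat_add_iff 1]
    exact (summable_norm_cliffordCoeff_mul_pow (a + 1) (‖w‖ + 1)).congr fun m ↦
      congrArg norm (by simpa using (succ_mul_cliffordCoeff_succ a m ▸ by ring))
  have hderiv := hasDerivAt_tsum_of_isPreconnected hsum isOpen_ball
    (convex_ball (0 : 𝕜) _).isPreconnected
    (fun m y _ ↦ (hasDerivAt_pow m y).const_mul (cliffordCoeff a m : 𝕜)) hbound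
    (mem_ball_self (by positivity)) (hasSum_besselClifford a 0).summable
    (show w ∈ ball (0 : 𝕜) (‖w‖ + 1) by simp)
  have htail : HasSum (fun m : ℕ ↦ (cliffordCoeff a m : 𝕜) * (m * w ^ (m - 1)))
      (besselClifford (a + 1) w) := by
    rw [← hasSum_nat_add_iff' 1]
    simpa only [Nat.add_sub_cancel, hsucc, Finset.range_one, Finset.sum_singleton, Nat.cast_zero,
      zero_mul, mul_zero, sub_zero] using hasSum_besselClifford (a + 1) w
  exact htail.tsum_eq ▸ hderiv

theorem differentiable_besselClifford (a : ℝ) : Differentiable 𝕜 (besselClifford a : 𝕜 → 𝕜) :=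
  fun w ↦ (hasDerivAt_besselClifford a w).differentiableAt

theorem continuous_besselClifford (a : ℝ) : Continuous (besselClifford a : 𝕜 → 𝕜) :=
  (differentiable_besselClifford a).continuous

theorem besselClifford_eq_add (a : ℝ) (w : 𝕜) :
    besselClifford a w
      = ((a + 1 : ℝ) : 𝕜) * besselClifford (a + 1) w + w * besselClifford (a + 2) w := by
  have hshift : HasSum (fun m : ℕ ↦ ((m * cliffordCoeff (a + 1) m : ℝ) : 𝕜) * w ^ m)
      (w * besselClifford (a + 2) w) := by
    rw [← hasSum_nat_add_iff' 1]
    simp only [Finset.range_one, Finset.sum_singleton, Nat.cast_zero, zero_mul,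
      RCLike.ofReal_zero, sub_zero]
    refine ((hasSum_besselClifford (a + 2) w).mul_left w).congr_fun fun m ↦ ?_
    rw [show a + 2 = a + 1 + 1 by ring, ← succ_mul_cliffordCoeff_succ (a + 1) m]
    push_cast
    ring
  refine (hasSum_besselClifford a w).unique
    ((((hasSum_besselClifford (a + 1) w).mul_left _).add hshift).congr_fun fun m ↦ ?_)
  rw [cliffordCoeff_eq_mul_add_one a m]
  push_cast
  ring

theorem besselJt_eq_besselClifford (a x : ℝ) :
    besselJt a x = besselClifford a (-(x ^ 2 / 4)) :=
  tsum_congr fun m ↦ by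
    rw [neg_pow (x ^ 2 / 4), pow_mul, show (x / 2) ^ 2 = x ^ 2 / 4 by ring,
      RCLike.ofReal_real_eq_id, id, cliffordCoeff]
    ring

theorem besselIt_eq_besselClifford (a x : ℝ) : besselIt a x = besselClifford a (x ^ 2 / 4) :=
  tsum_congr fun m ↦ by
    rw [pow_mul, show (x / 2) ^ 2 = x ^ 2 / 4 by ring, RCLike.ofReal_real_eq_id, id,
      cliffordCoeff]
    ring

end BesselClifford

/-! ### Gegenbauer polynomials as Taylor coefficients -/

section Gegenbauer

variable {𝕜 : Type*} [RCLike 𝕜]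

/-- The coefficient of `r ^ n` in `exp (r z) E_a(r² (z² - 1) / 4)`. Up to a factor it is the
Gegenbauer polynomial `C_n^{a + 1/2}`, see `gegenbauerCt_add_half`. -/
noncomputable def expGegenbauer (a : ℝ) (n : ℕ) (z : 𝕜) : 𝕜 :=
  ∑ k ∈ Finset.range (n / 2 + 1),
    z ^ (n - 2 * k) / (n - 2 * k).factorial * (cliffordCoeff a k * ((z ^ 2 - 1) / 4) ^ k)

theorem ofReal_expGegenbauer (a : ℝ) (n : ℕ) (x : ℝ) :
    ((expGegenbauer a n x : ℝ) : ℂ) = expGegenbauer a n (x : ℂ) := by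
  simp [expGegenbauer]

theorem expGegenbauer_one (a : ℝ) (n : ℕ) :
    expGegenbauer a n (1 : ℝ) = (n.factorial * Real.Gamma (a + 1))⁻¹ := by
  rw [expGegenbauer, Finset.sum_range_succ']
  simp [cliffordCoeff_zero, mul_comm]

theorem differentiable_expGegenbauer (a : ℝ) (n : ℕ) :
    Differentiable 𝕜 (expGegenbauer a n : 𝕜 → 𝕜) := by
  unfold expGegenbauer
  fun_prop

theorem succ_mul_mul_cliffordCoeff_succ (a : ℝ) (m : ℕ) :
    (m + 1) * (m + 1 + a) * cliffordCoeff a (m + 1) = cliffordCoeff a m := by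
  rw [mul_right_comm, succ_mul_cliffordCoeff_succ, cliffordCoeff_eq_mul_add_one a m]
  ring

theorem inv_Gamma_sub_two_mul_add_one {N i : ℕ} (h : N < 2 * i) :
    (Real.Gamma (N - 2 * i + 1))⁻¹ = 0 := by
  obtain ⟨k, hk⟩ := Nat.exists_eq_add_of_lt h
  rw [inv_eq_zero, show (N : ℝ) - 2 * i + 1 = -(k : ℝ) by
    have : (2 * i : ℝ) = N + k + 1 := mod_cast hk
    linarith, Real.Gamma_neg_nat_eq_zero]

/-- The coefficient of `r ^ N` in `exp r * E_a(r² / 4)`. -/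
noncomputable def expCliffordCoeff (a : ℝ) (N : ℕ) : ℝ :=
  ∑ i ∈ Finset.range (N / 2 + 1), cliffordCoeff a i / (4 ^ i * (N - 2 * i).factorial)

-- Writing `1 / (N - 2 i)!` as `1 / Γ(N - 2 i + 1)` makes the summands vanish beyond `N / 2`.
theorem expCliffordCoeff_eq_sum_range (a : ℝ) {N M : ℕ} (h : N / 2 < M) :
    expCliffordCoeff a N
      = ∑ i ∈ Finset.range M, cliffordCoeff a i / 4 ^ i * (Real.Gamma (N - 2 * i + 1))⁻¹ := by
  refine Finset.sum_subset_zero_on_sdiff (Finset.range_subset_range.2 h) (fun i hi ↦ ?_)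
    fun i hi ↦ ?_
  · rw [inv_Gamma_sub_two_mul_add_one (by grind), mul_zero]
  · have hi : 2 * i ≤ N := by grind
    rw [← Real.Gamma_nat_eq_factorial, Nat.cast_sub hi, div_mul_eq_div_div,
      div_eq_mul_inv _ (Real.Gamma _)]
    push_cast
    rfl

theorem succ_mul_expCliffordCoeff_succ (a : ℝ) (N : ℕ) :
    (N + 1) * (N + 1 + 2 * a) * expCliffordCoeff a (N + 1)
      = (2 * N + 2 * a + 1) * expCliffordCoeff a N := by
  set g : ℕ → ℝ := fun i ↦ (Real.Gamma (N - 2 * i + 1))⁻¹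
  set c : ℕ → ℝ := fun i ↦ cliffordCoeff a i / 4 ^ i
  have hg (i : ℕ) : ((N + 1 : ℕ) - 2 * i : ℝ) * (Real.Gamma ((N + 1 : ℕ) - 2 * i + 1))⁻¹ = g i := by
    rw [← inv_Gamma_eq_mul_inv_Gamma_add_one]
    simp only [g]
    push_cast
    ring_nf
  have hlast : g (N + 1) = 0 := inv_Gamma_sub_two_mul_add_one (by lia)
  have hsplit (i : ℕ) : (N + 1) * (N + 1 + 2 * a)
      * (c i * (Real.Gamma ((N + 1 : ℕ) - 2 * i + 1))⁻¹)
      = (N + 1 + 2 * a + 2 * i) * (c i * g i)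
        + 4 * i * (i + a) * (c i * (Real.Gamma ((N + 1 : ℕ) - 2 * i + 1))⁻¹) := by
    rw [← hg]
    push_cast
    ring
  have hshift (i : ℕ) : 4 * (i + 1 : ℕ) * ((i + 1 : ℕ) + a)
      * (c (i + 1) * (Real.Gamma ((N + 1 : ℕ) - 2 * (i + 1 : ℕ) + 1))⁻¹)
      = (N - 2 * i) * (c i * g i) := by
    have : (Real.Gamma ((N + 1 : ℕ) - 2 * (i + 1 : ℕ) + 1))⁻¹ = (N - 2 * i) * g i := by
      rw [← inv_Gamma_eq_mul_inv_Gamma_add_one]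
      push_cast
      ring_nf
    rw [this]
    simp only [c]
    rw [← succ_mul_mul_cliffordCoeff_succ a i]
    push_cast
    ring
  rw [expCliffordCoeff_eq_sum_range a (show (N + 1) / 2 < N + 2 by lia),
    expCliffordCoeff_eq_sum_range a (show N / 2 < N + 1 by lia), Finset.mul_sum, Finset.mul_sum,
    Finset.sum_congr rfl fun i _ ↦ hsplit i, Finset.sum_add_distrib, Finset.sum_range_succ,
    Finset.sum_range_succ' (fun i ↦ 4 * _ * _ * _), Finset.sum_congr rfl fun i _ ↦ hshift i, hlast]
  simp only [mul_zero, add_zero, Nat.cast_zero, zero_mul, ← Finset.sum_add_distrib]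
  exact Finset.sum_congr rfl fun i _ ↦ by ring

theorem expCliffordCoeff_one (a : ℝ) : expCliffordCoeff a 1 = (Real.Gamma (a + 1))⁻¹ := by
  simp [expCliffordCoeff, cliffordCoeff_zero]

theorem expCliffordCoeff_zero (a : ℝ) : expCliffordCoeff a 0 = (Real.Gamma (a + 1))⁻¹ := by
  simp [expCliffordCoeff, cliffordCoeff_zero]

theorem Gamma_two_mul_add_two {a : ℝ} (ha : -1 < a) :
    Real.Gamma (2 * a + 2) * (Real.Gamma (a + 1))⁻¹
      = 4 ^ a / √π * (2 * Real.Gamma (a + 3 / 2)) := by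
  have h4 : (2 : ℝ) ^ (1 - 2 * (a + 1)) * 4 ^ a * 2 = 1 := by
    rw [show (4 : ℝ) = 2 ^ (2 : ℝ) by norm_num, ← Real.rpow_mul two_pos.le,
      ← Real.rpow_add two_pos, ← Real.rpow_add_one two_ne_zero]
    ring_nf
    simp
  have h := Real.Gamma_mul_Gamma_add_half (a + 1)
  rw [show a + 1 + 1 / 2 = a + 3 / 2 by ring] at h
  rw [show 2 * a + 2 = 2 * (a + 1) by ring, ← div_eq_mul_inv, div_mul_eq_mul_div,
    div_eq_div_iff (Real.Gamma_pos_of_pos (by linarith)).ne' (by positivity)]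
  linear_combination (-(2 * 4 ^ a : ℝ)) * h - Real.Gamma (2 * (a + 1)) * √π * h4

theorem Gamma_mul_expCliffordCoeff_succ {a : ℝ} (ha : -1 < a) (N : ℕ) :
    Real.Gamma (2 * a + 2 + N) * expCliffordCoeff a (N + 1)
      = 4 ^ a / √π * (2 ^ (N + 1) * Real.Gamma (a + 3 / 2 + N) / (N + 1).factorial) := by
  induction N with
  | zero =>
    simpa [expCliffordCoeff_one] using Gamma_two_mul_add_two ha
  | succ N ih =>
    have hrec := succ_mul_expCliffordCoeff_succ a (N + 1)
    have hΓ1 := Real.Gamma_add_one (s := 2 * a + 2 + N) (by linarith [N.cast_nonneg (α := ℝ)])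
    have hΓ2 := Real.Gamma_add_one (s := a + 3 / 2 + N) (by linarith [N.cast_nonneg (α := ℝ)])
    rw [Nat.factorial_succ (N + 1), Nat.cast_mul]
    push_cast at hrec ⊢
    rw [← add_assoc, ← add_assoc, hΓ1, hΓ2]
    generalize Real.Gamma (2 * a + 2 + N) = G1 at *
    generalize Real.Gamma (a + 3 / 2 + N) = G2 at *
    field_simp at ih ⊢
    linear_combination 2 * √π * G1 * (N + 1).factorial * hrec + 2 * (2 * N + 2 * a + 3) * ih

theorem Gamma_mul_expCliffordCoeff {a : ℝ} {N : ℕ} (ha : -1 < a) (haN : 0 < a + 1 / 2 + N) :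
    Real.Gamma (2 * a + 1 + N) * expCliffordCoeff a N
      = 4 ^ a / √π * (2 ^ N * Real.Gamma (a + 1 / 2 + N) / N.factorial) := by
  cases N with
  | succ N =>
    rw [show 2 * a + 1 + ((N + 1 : ℕ) : ℝ) = 2 * a + 2 + N by push_cast; ring,
      show a + 1 / 2 + ((N + 1 : ℕ) : ℝ) = a + 3 / 2 + N by push_cast; ring]
    exact Gamma_mul_expCliffordCoeff_succ ha N
  | zero =>
    simp only [Nat.cast_zero, add_zero] at haN
    have hdup := Gamma_two_mul_add_two ha
    rw [show 2 * a + 2 = 2 * a + 1 + 1 by ring, Real.Gamma_add_one (by linarith),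
      show a + 3 / 2 = a + 1 / 2 + 1 by ring, Real.Gamma_add_one haN.ne'] at hdup
    simp only [Nat.cast_zero, add_zero, pow_zero, one_mul, Nat.factorial_zero, Nat.cast_one,
      div_one, expCliffordCoeff_zero]
    refine mul_left_cancel₀ (show 2 * a + 1 ≠ 0 by linarith) ?_
    linear_combination hdup

theorem expGegenbauer_eq_sum_expCliffordCoeff (a : ℝ) (n : ℕ) (x : ℝ) :
    expGegenbauer a n x = ∑ j ∈ Finset.range (n / 2 + 1),
      (-1) ^ j * x ^ (n - 2 * j) / (4 ^ j * j.factorial)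
        * expCliffordCoeff (a + j) (n - 2 * j) := by
  let F : ℕ → ℕ → ℝ := fun j i ↦ (-1) ^ j * x ^ (n - 2 * j) / (4 ^ j * j.factorial)
    * (cliffordCoeff (a + j) i / (4 ^ i * (n - 2 * j - 2 * i).factorial))
  have hexpand : ∀ k ∈ Finset.range (n / 2 + 1),
      x ^ (n - 2 * k) / (n - 2 * k).factorial * (cliffordCoeff a k * ((x ^ 2 - 1) / 4) ^ k)
      = ∑ j ∈ Finset.range (k + 1), F j (k - j) := by
    intro k hk
    have hk : 2 * k ≤ n := by grind
    rw [div_pow, sub_eq_neg_add, add_pow, Finset.sum_div, Finset.mul_sum, Finset.mul_sum]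
    refine Finset.sum_congr rfl fun j hj ↦ ?_
    obtain ⟨i, rfl⟩ := Nat.exists_eq_add_of_le (Finset.mem_range_succ_iff.1 hj)
    have hfac := Nat.choose_mul_factorial_mul_factorial (Nat.le_add_right j i)
    have hchoose : ((j + i).choose j : ℝ) = (j + i).factorial / (j.factorial * i.factorial) := by
      rw [eq_div_iff (by positivity)]
      exact_mod_cast by rw [← hfac, Nat.add_sub_cancel_left, mul_assoc]
    simp only [F, Nat.add_sub_cancel_left]
    rw [show n - 2 * j = n - 2 * (j + i) + 2 * i by lia,
      pow_add x, pow_mul x,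
      show n - 2 * (j + i) + 2 * i - 2 * i = n - 2 * (j + i) by lia, hchoose, cliffordCoeff,
      cliffordCoeff, show (i : ℝ) + (a + j) + 1 = (j + i : ℕ) + a + 1 by push_cast; ring]
    field
  simp only [expGegenbauer, RCLike.ofReal_real_eq_id, id_eq]
  rw [Finset.sum_congr rfl hexpand, Finset.sum_range_diag_flip (n / 2 + 1) F]
  refine Finset.sum_congr rfl fun j hj ↦ ?_
  rw [expCliffordCoeff, Finset.mul_sum, show n / 2 + 1 - j = (n - 2 * j) / 2 + 1 by grind]

theorem gegenbauerCt_add_half {a : ℝ} {n : ℕ} (ha : -1 < a) (han : 0 < a + 1 / 2 + n) (x : ℝ) :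
    4 ^ a / √π * gegenbauerCt n (a + 1 / 2) x
      = Real.Gamma (2 * a + 1 + n) * expGegenbauer a n x := by
  rw [expGegenbauer_eq_sum_expCliffordCoeff, gegenbauerCt, Finset.mul_sum, Finset.mul_sum]
  refine Finset.sum_congr rfl fun j hj ↦ ?_
  have hj : 2 * j ≤ n := by grind
  have hj' : (2 * j : ℝ) ≤ n := mod_cast hj
  have hsub : ((n - 2 * j : ℕ) : ℝ) = n - 2 * j := by push_cast [hj]; ring
  have hpos : 0 < a + j + 1 / 2 + (n - 2 * j : ℕ) := by
    rcases j.eq_zero_or_pos with rfl | hj0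
    · simpa using han
    · have : (1 : ℝ) ≤ j := mod_cast hj0
      linarith
  have hlead := Gamma_mul_expCliffordCoeff (a := a + j) (by linarith [j.cast_nonneg (α := ℝ)]) hpos
  rw [hsub, show 2 * (a + j) + 1 + (n - 2 * j : ℝ) = 2 * a + 1 + n by ring,
    show a + j + 1 / 2 + (n - 2 * j : ℝ) = a + 1 / 2 + n - j by ring,
    Real.rpow_add_natCast (by norm_num)] at hlead
  rw [mul_left_comm (Real.Gamma _), hlead, mul_pow]
  field

theorem gegenbauerCt_one {a : ℝ} {n : ℕ} (ha : -1 < a) (han : 0 < a + 1 / 2 + n) :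
    4 ^ a / √π * gegenbauerCt n (a + 1 / 2) 1
      = Real.Gamma (2 * a + 1 + n) / (n.factorial * Real.Gamma (a + 1)) := by
  rw [gegenbauerCt_add_half ha han, expGegenbauer_one, div_eq_mul_inv]

end Gegenbauer

/-! ### Integral representations and bounds -/

section IntegralRepresentation

open ProbabilityTheory

theorem integral_betaPDFReal {p q : ℝ} (hp : 0 < p) (hq : 0 < q) :
    ∫ x, betaPDFReal p q x = 1 := by
  have hnonneg (x : ℝ) : 0 ≤ betaPDFReal p q x := by
    by_cases hx : 0 < x ∧ x < 1
    · exact (betaPDFReal_pos hx.1 hx.2 hp hq).le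
    · rw [betaPDFReal, if_neg hx]
  rw [integral_eq_lintegral_of_nonneg_ae (.of_forall hnonneg)
    (stronglyMeasurable_betaPDFReal p q).aestronglyMeasurable]
  exact congrArg ENNReal.toReal (lintegral_betaPDF_eq_one hp hq)

theorem integral_pow_betaMeasure {p q : ℝ} (hp : 0 < p) (hq : 0 < q) (k : ℕ) :
    ∫ x, x ^ k ∂betaMeasure p q = beta (p + k) q / beta p q := by
  have hshift (x : ℝ) : (betaPDF p q x).toReal • x ^ k
      = beta (p + k) q / beta p q * betaPDFReal (p + k) q x := by
    have hbeta : beta (p + k) q ≠ 0 := (beta_pos (by positivity) hq).ne'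
    by_cases hx : 0 < x ∧ x < 1
    · rw [betaPDF, ENNReal.toReal_ofReal (betaPDFReal_pos hx.1 hx.2 hp hq).le, betaPDFReal,
        if_pos hx, betaPDFReal, if_pos hx, show p + k - 1 = p - 1 + k by ring,
        Real.rpow_add_natCast hx.1.ne']
      simp only [smul_eq_mul]
      field
    · simp [betaPDF, betaPDFReal, if_neg hx]
  rw [betaMeasure, integral_withDensity_eq_integral_toReal_smul
    (f := betaPDF p q) (measurable_betaPDFReal p q).ennreal_ofReal
    (.of_forall fun _ ↦ ENNReal.ofReal_lt_top)]
  simp only [hshift]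
  rw [integral_const_mul, integral_betaPDFReal (by positivity) hq, mul_one]

/-- The law of the random variable `U ∈ [0, 1]` in Poisson's representation
`Γ(a + 1) J̃_a(z) = 𝔼 cos(z √U)`, for `a ≥ -1/2`. -/
noncomputable def besselMeasure (a : ℝ) : Measure ℝ :=
  if a = -1 / 2 then .dirac 1 else betaMeasure (1 / 2) (a + 1 / 2)

theorem isProbabilityMeasure_besselMeasure {a : ℝ} (ha : -1 / 2 ≤ a) :
    IsProbabilityMeasure (besselMeasure a) := by
  unfold besselMeasure
  split_ifs with h
  · infer_instance
  · exact isProbabilityMeasureBeta (by norm_num) (by grind)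

theorem ae_besselMeasure (a : ℝ) : ∀ᵐ u ∂besselMeasure a, u ∈ Icc (0 : ℝ) 1 := by
  unfold besselMeasure
  split_ifs with h
  · rw [ae_dirac_iff (p := (· ∈ Icc (0 : ℝ) 1)) measurableSet_Icc]
    norm_num
  · refine (ae_withDensity_iff (measurable_betaPDFReal _ _).ennreal_ofReal).2 (.of_forall ?_)
    intro u hu
    exact ⟨le_of_not_gt fun h ↦ hu (betaPDF_eq_zero_of_nonpos h.le),
      le_of_not_gt fun h ↦ hu (betaPDF_eq_zero_of_one_le h.le)⟩

theorem factorial_two_mul_div (k : ℕ) :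
    ((2 * k).factorial : ℝ) / (4 ^ k * k.factorial) = Real.Gamma (1 / 2 + k) / √π := by
  induction k with
  | zero => rw [Nat.cast_zero, add_zero, Real.Gamma_one_half_eq, div_self (by positivity)]; simp
  | succ k ih =>
    rw [show (1 / 2 : ℝ) + (k + 1 : ℕ) = 1 / 2 + k + 1 by push_cast; ring,
      Real.Gamma_add_one (by positivity), mul_div_assoc, ← ih, mul_add_one, Nat.factorial_succ,
      Nat.factorial_succ (2 * k), Nat.factorial_succ k]
    push_cast
    field

theorem integral_pow_besselMeasure {a : ℝ} (ha : -1 / 2 ≤ a) (k : ℕ) :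
    ∫ u, u ^ k ∂besselMeasure a
      = Real.Gamma (a + 1) * (2 * k).factorial * (cliffordCoeff a k / 4 ^ k) := by
  have hΓ : Real.Gamma (k + a + 1) ≠ 0 :=
    (Real.Gamma_pos_of_pos (by linarith [k.cast_nonneg (α := ℝ)])).ne'
  have hfac := factorial_two_mul_div k
  unfold besselMeasure cliffordCoeff
  split_ifs with h
  · subst h
    rw [integral_dirac, one_pow, show (k : ℝ) + -1 / 2 + 1 = 1 / 2 + k by ring,
      show (-1 / 2 + 1 : ℝ) = 1 / 2 by norm_num, Real.Gamma_one_half_eq]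
    rw [show (k : ℝ) + -1 / 2 + 1 = 1 / 2 + k by ring] at hΓ
    field_simp at hfac ⊢
    linear_combination -hfac
  · have hpos : 0 < a + 1 / 2 := by grind
    have hΓa : Real.Gamma (a + 1 / 2) ≠ 0 := (Real.Gamma_pos_of_pos hpos).ne'
    have hΓ1 : Real.Gamma (a + 1) ≠ 0 := (Real.Gamma_pos_of_pos (by linarith)).ne'
    rw [integral_pow_betaMeasure (by norm_num) hpos, beta, beta, Real.Gamma_one_half_eq,
      show 1 / 2 + k + (a + 1 / 2) = k + a + 1 by ring, show 1 / 2 + (a + 1 / 2) = a + 1 by ring]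
    generalize Real.Gamma (a + 1 / 2) = G at *
    field_simp at hfac ⊢
    linear_combination -hfac

theorem norm_cos_add_mul_sin_mul_I_le (z : ℂ) {s : ℝ} (hs : |s| ≤ 1) :
    ‖Complex.cos z + s * (Complex.sin z * Complex.I)‖ ≤ Real.exp |z.im| := by
  have hs := abs_le.1 hs
  have hconvex : Complex.cos z + s * (Complex.sin z * Complex.I)
      = ((1 + s) / 2 : ℝ) * Complex.exp (z * Complex.I)
        + ((1 - s) / 2 : ℝ) * Complex.exp (-z * Complex.I) := by
    rw [Complex.exp_mul_I, Complex.exp_mul_I, Complex.cos_neg, Complex.sin_neg]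
    push_cast
    ring
  calc ‖Complex.cos z + s * (Complex.sin z * Complex.I)‖
    _ ≤ (1 + s) / 2 * Real.exp (-z.im) + (1 - s) / 2 * Real.exp z.im := by
      rw [hconvex]
      refine (norm_add_le _ _).trans_eq ?_
      rw [norm_mul, norm_mul, Complex.norm_real, Complex.norm_real, Complex.norm_exp,
        Complex.norm_exp, Real.norm_of_nonneg (by linarith), Real.norm_of_nonneg (by linarith)]
      simp
    _ ≤ (1 + s) / 2 * Real.exp |z.im| + (1 - s) / 2 * Real.exp |z.im| := by
      gcongr
      · linarith
      · exact neg_le_abs _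
      · linarith
      · exact le_abs_self _
    _ = Real.exp |z.im| := by ring

theorem norm_cos_le_exp_abs_im (z : ℂ) : ‖Complex.cos z‖ ≤ Real.exp |z.im| := by
  simpa using norm_cos_add_mul_sin_mul_I_le z (s := 0) (by simp)

theorem norm_integral_besselMeasure_le {a : ℝ} (ha : -1 / 2 ≤ a) {f : ℝ → ℂ} {C : ℝ}
    (hf : ∀ u ∈ Icc (0 : ℝ) 1, ‖f u‖ ≤ C) : ‖∫ u, f u ∂besselMeasure a‖ ≤ C := by
  have := isProbabilityMeasure_besselMeasure ha
  simpa using norm_integral_le_of_norm_le_const ((ae_besselMeasure a).mono hf)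

theorem integrable_pow_besselMeasure {a : ℝ} (ha : -1 / 2 ≤ a) (k : ℕ) :
    Integrable (fun u : ℝ ↦ ((u ^ k : ℝ) : ℂ)) (besselMeasure a) := by
  have := isProbabilityMeasure_besselMeasure ha
  refine .of_bound (by fun_prop) 1 ((ae_besselMeasure a).mono fun u hu ↦ ?_)
  rw [Complex.norm_real, norm_pow, Real.norm_of_nonneg hu.1]
  exact pow_le_one₀ hu.1 hu.2

theorem integral_cos_mul_sqrt_besselMeasure {a : ℝ} (ha : -1 / 2 ≤ a) (z : ℂ) :
    ∫ u, Complex.cos (z * √u) ∂besselMeasure a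
      = Real.Gamma (a + 1) * besselClifford a (-(z ^ 2 / 4)) := by
  have hterm (k : ℕ) : ∫ u, (-1) ^ k * z ^ (2 * k) / (2 * k).factorial * ((u ^ k : ℝ) : ℂ)
      ∂besselMeasure a = Real.Gamma (a + 1) * (cliffordCoeff a k * (-(z ^ 2 / 4)) ^ k) := by
    rw [integral_const_mul, integral_complex_ofReal, integral_pow_besselMeasure ha,
      neg_pow (z ^ 2 / 4), div_pow, ← pow_mul]
    push_cast
    have : ((2 * k).factorial : ℂ) ≠ 0 := mod_cast (2 * k).factorial_ne_zero
    field
  have := isProbabilityMeasure_besselMeasure ha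
  have hsummable : Summable ((fun n : ℕ ↦ ‖z‖ ^ n / n.factorial) ∘ (2 * ·)) :=
    (Real.summable_pow_div_factorial ‖z‖).comp_injective (mul_right_injective₀ two_ne_zero)
  have hsum := (hasSum_besselClifford a (-(z ^ 2 / 4))).mul_left (Real.Gamma (a + 1) : ℂ)
  refine HasSum.unique ((hasSum_integral_of_dominated_convergence
    (F := fun (k : ℕ) (u : ℝ) ↦ (-1) ^ k * z ^ (2 * k) / (2 * k).factorial * ((u ^ k : ℝ) : ℂ))
    (fun k _ ↦ ‖z‖ ^ (2 * k) / (2 * k).factorial) (fun k ↦ by fun_prop) (fun k ↦ ?_)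
    (.of_forall fun _ ↦ hsummable) (integrable_const _) ?_).congr_fun fun k ↦ (hterm k).symm) hsum
  · refine (ae_besselMeasure a).mono fun u hu ↦ ?_
    simp only [norm_mul, norm_div, norm_pow, norm_neg, norm_one, one_pow, one_mul,
      Complex.norm_natCast, Complex.norm_real, Real.norm_of_nonneg hu.1]
    exact mul_le_of_le_one_right (by positivity) (pow_le_one₀ hu.1 hu.2)
  · refine (ae_besselMeasure a).mono fun u hu ↦ ?_
    refine (Complex.hasSum_cos (z * √u)).congr_fun fun k ↦ ?_
    have hsqrt : ((√u : ℝ) : ℂ) ^ (2 * k) = ((u ^ k : ℝ) : ℂ) := by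
      rw [pow_mul, ← Complex.ofReal_pow, Real.sq_sqrt hu.1, Complex.ofReal_pow]
    rw [mul_pow, hsqrt]
    ring

theorem norm_besselClifford_neg_sq_div_four_le {a : ℝ} (ha : -1 / 2 ≤ a) (z : ℂ) :
    ‖besselClifford a (-(z ^ 2 / 4))‖ ≤ Real.exp |z.im| / Real.Gamma (a + 1) := by
  have hΓ : 0 < Real.Gamma (a + 1) := Real.Gamma_pos_of_pos (by linarith)
  rw [le_div_iff₀' hΓ, ← Real.norm_of_nonneg hΓ.le, ← Complex.norm_real, ← norm_mul,
    ← integral_cos_mul_sqrt_besselMeasure ha]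
  refine norm_integral_besselMeasure_le ha fun u hu ↦ (norm_cos_le_exp_abs_im _).trans ?_
  rw [Complex.im_mul_ofReal, abs_mul, abs_of_nonneg (Real.sqrt_nonneg u)]
  exact Real.exp_le_exp.2 (mul_le_of_le_one_right (abs_nonneg _) (Real.sqrt_le_one.2 hu.2))

theorem sum_choose_two_mul (z w : ℂ) (n : ℕ) :
    ∑ k ∈ Finset.range (n / 2 + 1), (n.choose (2 * k) : ℂ) * z ^ (n - 2 * k) * w ^ (2 * k)
      = ((z + w) ^ n + (z - w) ^ n) / 2 := by
  have hhalf : ((z + w) ^ n + (z - w) ^ n) / 2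
      = ∑ m ∈ Finset.range (n + 1), (1 + (-1) ^ m) / 2 * (n.choose m * z ^ (n - m) * w ^ m) := by
    rw [add_comm z, sub_eq_neg_add, add_pow, add_pow, ← Finset.sum_add_distrib, Finset.sum_div]
    refine Finset.sum_congr rfl fun m _ ↦ ?_
    rw [neg_pow w]
    ring
  rw [hhalf]
  refine Finset.sum_of_injOn (2 * ·) (fun _ _ _ _ h ↦ mul_left_cancel₀ two_ne_zero h)
    (fun k hk ↦ by grind) (fun m hm hodd ↦ ?_) fun k _ ↦ by simp
  have : Odd m := by
    rw [← Nat.not_even_iff_odd, even_iff_exists_two_mul]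
    rintro ⟨k, rfl⟩
    exact hodd ⟨k, by grind, rfl⟩
  simp [this.neg_one_pow]

theorem integral_pow_add_pow_besselMeasure {a : ℝ} (ha : -1 / 2 ≤ a) (n : ℕ) {z w : ℂ}
    (hw : w ^ 2 = z ^ 2 - 1) :
    ∫ u, ((z + √u * w) ^ n + (z - √u * w) ^ n) / 2 ∂besselMeasure a
      = n.factorial * Real.Gamma (a + 1) * expGegenbauer a n z := by
  have hexpand : ∀ u ∈ Icc (0 : ℝ) 1, ((z + √u * w) ^ n + (z - √u * w) ^ n) / 2
      = ∑ k ∈ Finset.range (n / 2 + 1),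
        (n.choose (2 * k) : ℂ) * z ^ (n - 2 * k) * (z ^ 2 - 1) ^ k * ((u ^ k : ℝ) : ℂ) := by
    intro u hu
    rw [← sum_choose_two_mul]
    refine Finset.sum_congr rfl fun k _ ↦ ?_
    rw [mul_pow, pow_mul, ← Complex.ofReal_pow, Real.sq_sqrt hu.1, pow_mul w, hw]
    push_cast
    ring
  rw [integral_congr_ae ((ae_besselMeasure a).mono hexpand),
    integral_finsetSum _ fun k _ ↦ (integrable_pow_besselMeasure ha k).const_mul _,
    expGegenbauer, Finset.mul_sum]
  refine Finset.sum_congr rfl fun k hk ↦ ?_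
  have hk : 2 * k ≤ n := by grind
  rw [integral_const_mul, integral_complex_ofReal, integral_pow_besselMeasure ha, div_pow,
    RCLike.ofReal_eq_complex_ofReal,
    ← Nat.choose_mul_factorial_mul_factorial hk]
  have : ((n - 2 * k).factorial : ℂ) ≠ 0 := mod_cast (n - 2 * k).factorial_ne_zero
  push_cast
  field

theorem norm_expGegenbauer_cos_le {a : ℝ} (ha : -1 / 2 ≤ a) (n : ℕ) (z : ℂ) :
    ‖expGegenbauer a n (Complex.cos z)‖
      ≤ Real.exp (n * |z.im|) / (n.factorial * Real.Gamma (a + 1)) := by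
  have hΓ : 0 < Real.Gamma (a + 1) := Real.Gamma_pos_of_pos (by linarith)
  have hw : (Complex.sin z * Complex.I) ^ 2 = Complex.cos z ^ 2 - 1 := by
    rw [mul_pow, Complex.I_sq]
    linear_combination -Complex.sin_sq_add_cos_sq z
  have hnorm : ‖(n.factorial * Real.Gamma (a + 1) : ℂ)‖ = n.factorial * Real.Gamma (a + 1) := by
    simp [abs_of_pos hΓ]
  rw [le_div_iff₀' (by positivity), ← hnorm, ← norm_mul,
    ← integral_pow_add_pow_besselMeasure ha n hw]
  refine norm_integral_besselMeasure_le ha fun u hu ↦ ?_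
  have hs : |√u| ≤ 1 := by
    rw [abs_of_nonneg (Real.sqrt_nonneg u)]
    exact Real.sqrt_le_one.2 hu.2
  have hplus := norm_cos_add_mul_sin_mul_I_le z hs
  have hminus := norm_cos_add_mul_sin_mul_I_le z (s := -√u) (by rwa [abs_neg])
  rw [Complex.ofReal_neg, neg_mul, ← sub_eq_add_neg] at hminus
  calc _ ≤ (Real.exp |z.im| ^ n + Real.exp |z.im| ^ n) / 2 := by
        rw [norm_div, Complex.norm_two]
        gcongr
        refine (norm_add_le _ _).trans ?_
        rw [norm_pow, norm_pow]
        gcongr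
    _ = Real.exp (n * |z.im|) := by rw [add_self_div_two, Real.exp_nat_mul]

end IntegralRepresentation

/-! ### Generating functions and a Laplace transform -/

section Laplace

theorem Gamma_add_natCast {r : ℝ} (hr : 0 < r) (n : ℕ) :
    Real.Gamma (r + n) = n.factorial * Ring.choose (r + n - 1) n * Real.Gamma r := by
  rw [← Ring.multichoose_eq, ← nsmul_eq_mul, Ring.factorial_nsmul_multichoose_eq_ascPochhammer,
    Polynomial.ascPochhammer_smeval_eq_eval]
  induction n with
  | zero => simp
  | succ n ih =>
    rw [Nat.cast_succ, ← add_assoc, Real.Gamma_add_one (by positivity), ih,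
      ascPochhammer_succ_eval]
    ring

theorem hasSum_Gamma_div_factorial_mul_pow {r z : ℝ} (hr : 0 < r) (hz : |z| < 1) :
    HasSum (fun m : ℕ ↦ Real.Gamma (r + m) / m.factorial * z ^ m)
      (Real.Gamma r * (1 - z) ^ (-r)) := by
  have hbin := (Real.one_div_one_sub_rpow_hasFPowerSeriesOnBall_zero r).hasSum (y := z)
    (by simpa [← ofReal_norm] using hz)
  rw [zero_add, one_div, ← Real.rpow_neg (by linarith [le_abs_self z])] at hbin
  refine (hbin.mul_left (Real.Gamma r)).congr_fun fun m ↦ ?_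
  rw [Gamma_add_natCast hr, FormalMultilinearSeries.ofScalars_apply_eq]
  simp only [smul_eq_mul]
  field

theorem hasSum_pow_div_factorial (x : ℝ) :
    HasSum (fun n : ℕ ↦ x ^ n / n.factorial) (Real.exp x) := by
  rw [Real.exp_eq_exp_ℝ]
  exact NormedSpace.expSeries_div_hasSum_exp x

theorem hasSum_pow_mul_expGegenbauer (a r z : ℝ) :
    HasSum (fun n : ℕ ↦ r ^ n * expGegenbauer a n z)
      (Real.exp (r * z) * besselClifford a (r ^ 2 * (z ^ 2 - 1) / 4)) := by
  let w : ℝ := r ^ 2 * (z ^ 2 - 1) / 4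
  let g : ℕ → ℝ := fun i ↦ if Even i then cliffordCoeff a (i / 2) * w ^ (i / 2) else 0
  have hg_even : g ∘ (2 * ·) = fun m ↦ cliffordCoeff a m * w ^ m := by
    funext m
    simp [g]
  have hg_odd : ∀ i ∉ Set.range (2 * · : ℕ → ℕ), g i = 0 := fun i hi ↦
    if_neg fun ⟨m, hm⟩ ↦ hi ⟨m, by lia⟩
  have hinj : Function.Injective (2 * · : ℕ → ℕ) := mul_right_injective₀ two_ne_zero
  have hg : HasSum g (besselClifford a w) := by
    rw [← hinj.hasSum_iff hg_odd, hg_even]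
    exact hasSum_besselClifford a w
  have hexp := hasSum_pow_div_factorial (r * z)
  have hprod := hasSum_sum_range_mul_of_summable_norm hg.summable.norm hexp.summable.norm
  rw [hg.tsum_eq, hexp.tsum_eq, mul_comm (besselClifford a w)] at hprod
  refine hprod.congr_fun fun n ↦ ?_
  rw [expGegenbauer, Finset.mul_sum]
  refine Finset.sum_of_injOn (2 * ·) hinj.injOn (fun k hk ↦ by grind)
    (fun i hi hik ↦ ?_) fun k hk ↦ ?_
  · rw [hg_odd i fun ⟨k, hk⟩ ↦ hik ⟨k, by grind, hk⟩, zero_mul]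
  · have hk : 2 * k ≤ n := by grind
    rw [show g (2 * k) = cliffordCoeff a k * w ^ k from congr_fun hg_even k]
    simp only [w, RCLike.ofReal_real_eq_id, id_eq]
    obtain ⟨l, rfl⟩ := Nat.exists_eq_add_of_le hk
    rw [Nat.add_sub_cancel_left, pow_add, pow_mul, mul_div_assoc, mul_pow, mul_pow]
    ring

theorem cliffordCoeff_mul_Gamma_add_two_mul {b : ℝ} {k : ℕ} (hb : -1 < b)
    (hbk : 0 < b + 1 / 2 + k) (m : ℕ) :
    cliffordCoeff b m * Real.Gamma (2 * b + 1 + k + 2 * m)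
      = 4 ^ m * (k.factorial * (4 ^ b / √π) * ∑ j ∈ Finset.range (k / 2 + 1),
        (-1) ^ j / (j.factorial * (k - 2 * j).factorial) * 2 ^ (k - 2 * j)
          * (Real.Gamma (b + 1 / 2 + k - j + m) / m.factorial)) := by
  have hbm : -1 < b + m := by linarith [m.cast_nonneg (α := ℝ)]
  have hone := gegenbauerCt_one (n := k) hbm (by linarith [m.cast_nonneg (α := ℝ)])
  have hΓ := Real.Gamma_pos_of_pos (neg_lt_iff_pos_add.1 hbm)
  rw [eq_div_iff (by positivity), Real.rpow_add_natCast (by norm_num)] at hone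
  rw [show 2 * b + 1 + k + 2 * m = 2 * (b + m) + 1 + k by ring, ← hone, gegenbauerCt,
    cliffordCoeff, Finset.mul_sum, Finset.mul_sum, Finset.sum_mul, Finset.mul_sum, Finset.mul_sum]
  refine Finset.sum_congr rfl fun j _ ↦ ?_
  rw [show b + m + 1 / 2 + k - j = b + 1 / 2 + k - j + m by ring,
    show m + b + 1 = b + m + 1 by ring]
  field

theorem hasSum_cliffordCoeff_mul_Gamma_mul_pow {b c : ℝ} {k : ℕ} (hb : -1 < b)
    (hbk : 0 < b + 1 / 2 + k) (hc : 0 < c) (hc2 : 1 / 2 < c ^ 2) :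
    HasSum (fun m : ℕ ↦ cliffordCoeff b m * Real.Gamma (2 * b + 1 + k + 2 * m)
        * ((1 - (c ^ 2)⁻¹) / 4) ^ m)
      (c ^ (2 * b + 1 + k) * (k.factorial * Real.Gamma (2 * b + 1 + k) * expGegenbauer b k c)) := by
  set z : ℝ := 1 - (c ^ 2)⁻¹ with hz
  have hz1 : |z| < 1 := by
    have : (c ^ 2)⁻¹ < 2 := by rw [inv_lt_comm₀ (by positivity) two_pos]; linarith
    have : 0 < (c ^ 2)⁻¹ := by positivity
    grind
  have hpow (j : ℕ) (hj : 2 * j ≤ k) :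
      (1 - z) ^ (-(b + 1 / 2 + k - j)) = c ^ (2 * b + 1 + k) * c ^ (k - 2 * j) := by
    rw [hz, sub_sub_cancel, ← Real.rpow_neg_one, ← Real.rpow_natCast c 2, ← Real.rpow_mul hc.le,
      ← Real.rpow_mul hc.le, ← Real.rpow_natCast c (k - 2 * j), ← Real.rpow_add hc]
    push_cast [hj]
    ring_nf
  have hsum : HasSum (fun m : ℕ ↦ ∑ j ∈ Finset.range (k / 2 + 1),
      (-1) ^ j / (j.factorial * (k - 2 * j).factorial) * 2 ^ (k - 2 * j)
        * (Real.Gamma (b + 1 / 2 + k - j + m) / m.factorial * z ^ m))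
      (∑ j ∈ Finset.range (k / 2 + 1),
        (-1) ^ j / (j.factorial * (k - 2 * j).factorial) * 2 ^ (k - 2 * j)
          * (Real.Gamma (b + 1 / 2 + k - j) * (1 - z) ^ (-(b + 1 / 2 + k - j)))) := by
    refine hasSum_sum fun j hj ↦ (hasSum_Gamma_div_factorial_mul_pow ?_ hz1).mul_left _
    have hj : (2 * j : ℝ) ≤ k := mod_cast (by grind : 2 * j ≤ k)
    rcases j.eq_zero_or_pos with rfl | hj0
    · simpa using hbk
    · have : (1 : ℝ) ≤ j := mod_cast hj0
      linarith
  have hvalue : c ^ (2 * b + 1 + k)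
      * (k.factorial * Real.Gamma (2 * b + 1 + k) * expGegenbauer b k c)
      = k.factorial * (4 ^ b / √π) * ∑ j ∈ Finset.range (k / 2 + 1),
        (-1) ^ j / (j.factorial * (k - 2 * j).factorial) * 2 ^ (k - 2 * j)
          * (Real.Gamma (b + 1 / 2 + k - j) * (1 - z) ^ (-(b + 1 / 2 + k - j))) := by
    rw [mul_assoc (k.factorial : ℝ), ← gegenbauerCt_add_half hb hbk, gegenbauerCt, Finset.mul_sum,
      Finset.mul_sum, Finset.mul_sum, Finset.mul_sum]
    refine Finset.sum_congr rfl fun j hj ↦ ?_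
    rw [hpow j (by grind), mul_pow]
    ring
  rw [hvalue]
  refine (hsum.mul_left (k.factorial * (4 ^ b / √π))).congr_fun fun m ↦ ?_
  rw [cliffordCoeff_mul_Gamma_add_two_mul hb hbk, div_pow, Finset.mul_sum, Finset.mul_sum,
    Finset.mul_sum, Finset.sum_mul]
  exact Finset.sum_congr rfl fun j _ ↦ by field

theorem integrableOn_Ioi_rpow_mul_exp_neg_mul {a r : ℝ} (ha : -1 < a) (hr : 0 < r) :
    IntegrableOn (fun x : ℝ ↦ x ^ a * Real.exp (-(r * x))) (Ioi 0) := by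
  simpa using integrableOn_rpow_mul_exp_neg_mul_rpow ha one_pos hr

theorem integral_pow_mul_Ioi_rpow_mul_exp_neg_mul {c r s : ℝ} {m : ℕ} (hr : 0 < r + 2 * m)
    (hc : 0 < c) (hcs : c ^ 2 + s ^ 2 = 1) :
    ∫ w in Ioi 0, (-(s ^ 2 / 4)) ^ m * (w ^ (r + 2 * m - 1) * Real.exp (-(c * w)))
      = c ^ (-r) * (Real.Gamma (r + 2 * m) * ((1 - (c ^ 2)⁻¹) / 4) ^ m) := by
  have hratio : -(s ^ 2 / 4) = (1 - (c ^ 2)⁻¹) / 4 * c ^ 2 := by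
    field_simp
    linarith
  have hcm : c ^ (2 * m : ℝ) = (c ^ 2) ^ m := by
    rw [← pow_mul, ← Real.rpow_natCast]
    push_cast
    rfl
  rw [integral_const_mul, Real.integral_rpow_mul_exp_neg_mul_Ioi hr hc, one_div,
    ← Real.rpow_neg_eq_inv_rpow, neg_add, Real.rpow_add hc, hratio, mul_pow,
    Real.rpow_neg hc.le (2 * m), hcm]
  field

theorem setIntegral_norm_const_mul_of_nonneg {S : Set ℝ} (hS : MeasurableSet S) {f : ℝ → ℝ}
    (hf : ∀ w ∈ S, 0 ≤ f w) (r : ℝ) :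
    ∫ w in S, ‖r * f w‖ = |∫ w in S, r * f w| := by
  rw [integral_const_mul, abs_mul, abs_of_nonneg (setIntegral_nonneg hS hf), ← integral_const_mul]
  refine setIntegral_congr_fun hS fun w hw ↦ ?_
  simp only [norm_mul, Real.norm_eq_abs, abs_of_nonneg (hf w hw)]

theorem integral_Ioi_rpow_mul_exp_mul_besselClifford {b c s : ℝ} {k : ℕ} (hb : -1 < b)
    (hbk : 0 < b + 1 / 2 + k) (hc : 0 < c) (hcs : c ^ 2 + s ^ 2 = 1) (hsc : s ^ 2 < c ^ 2) :
    ∫ w in Ioi 0, w ^ (2 * b + k) * Real.exp (-(c * w)) * besselClifford b (-(w ^ 2 * s ^ 2 / 4))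
      = k.factorial * Real.Gamma (2 * b + 1 + k) * expGegenbauer b k c := by
  let F : ℕ → ℝ → ℝ := fun m w ↦ cliffordCoeff b m * (-(s ^ 2 / 4)) ^ m
    * (w ^ (2 * b + 1 + k + 2 * m - 1) * Real.exp (-(c * w)))
  have hexpo (m : ℕ) : 0 < 2 * b + 1 + k + 2 * m := by
    have hk : 0 < 2 * b + 1 + k := by
      rcases k.eq_zero_or_pos with rfl | hk
      · norm_num at hbk ⊢
        linarith
      · have : (1 : ℝ) ≤ k := mod_cast hk
        linarith
    positivity
  have hFint (m : ℕ) : Integrable (F m) (volume.restrict (Ioi 0)) :=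
    (integrableOn_Ioi_rpow_mul_exp_neg_mul (by linarith [hexpo m]) hc).const_mul _
  have hF (m : ℕ) : ∫ w in Ioi 0, F m w = c ^ (-(2 * b + 1 + k))
      * (cliffordCoeff b m * Real.Gamma (2 * b + 1 + k + 2 * m) * ((1 - (c ^ 2)⁻¹) / 4) ^ m) := by
    simp only [F, mul_assoc (cliffordCoeff b m)]
    rw [integral_const_mul, integral_pow_mul_Ioi_rpow_mul_exp_neg_mul (hexpo m) hc hcs]
    ring
  have hFnorm (m : ℕ) : ∫ w in Ioi 0, ‖F m w‖ = |∫ w in Ioi 0, F m w| :=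
    setIntegral_norm_const_mul_of_nonneg measurableSet_Ioi
      (fun w (hw : 0 < w) ↦ by positivity) _
  have hsum : HasSum (fun m ↦ ∫ w in Ioi 0, F m w)
      (k.factorial * Real.Gamma (2 * b + 1 + k) * expGegenbauer b k c) := by
    simp only [hF]
    have := (hasSum_cliffordCoeff_mul_Gamma_mul_pow hb hbk hc (by linarith)).mul_left
      (c ^ (-(2 * b + 1 + k)))
    rwa [← mul_assoc _ (c ^ (2 * b + 1 + k)), ← Real.rpow_add hc, neg_add_cancel,
      Real.rpow_zero, one_mul] at this
  rw [← (hasSum_integral_of_summable_integral_norm hFint ?_).unique hsum]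
  · refine setIntegral_congr_fun measurableSet_Ioi fun w (hw : 0 < w) ↦ ?_
    rw [besselClifford, ← tsum_mul_left]
    refine tsum_congr fun m ↦ ?_
    have hwm : w ^ (2 * b + 1 + k + 2 * m - 1) = w ^ (2 * b + k) * (w ^ 2) ^ m := by
      rw [← pow_mul, ← Real.rpow_add_natCast hw.ne']
      push_cast
      ring_nf
    simp only [F, hwm, RCLike.ofReal_real_eq_id, id_eq]
    rw [show -(w ^ 2 * s ^ 2 / 4) = -(s ^ 2 / 4) * w ^ 2 by ring, mul_pow]
    ring
  · simp only [hFnorm]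
    exact hsum.summable.abs

end Laplace

/-! ### The modified Bessel function of the second kind -/

section Macdonald

open scoped Topology

theorem rpow_mul_exp_neg_le {r x : ℝ} (hr : 0 ≤ r) (hx : 0 ≤ x) :
    x ^ r * Real.exp (-x) ≤ r ^ r := by
  rcases hr.eq_or_lt with rfl | hr
  · simpa using hx
  · have hlin : x ≤ r * Real.exp (x / r) := by
      rw [mul_comm, ← div_le_iff₀ hr]
      linarith [Real.add_one_le_exp (x / r)]
    calc x ^ r * Real.exp (-x) ≤ (r * Real.exp (x / r)) ^ r * Real.exp (-x) := by gcongr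
      _ = r ^ r := by
        rw [Real.mul_rpow hr.le (Real.exp_nonneg _), ← Real.exp_mul, div_mul_cancel₀ _ hr.ne',
          mul_assoc, ← Real.exp_add, add_neg_cancel, Real.exp_zero, mul_one]

theorem exp_neg_add_div_le {η r s z : ℝ} (hη : 0 < η) (hη1 : η ≤ 1) (hr : 0 ≤ r) (hs : 0 < s)
    (hz : 0 < z) :
    Real.exp (-(s + z / s))
      ≤ (r / (η * z)) ^ r * Real.exp (-(2 * (1 - η) * √z)) * (s ^ r * Real.exp (-(η * s))) := by
  have hamgm : 2 * √z ≤ s + z / s := by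
    have := two_mul_le_add_sq (√s) (√z / √s)
    rwa [mul_assoc, mul_div_cancel₀ _ (by positivity), div_pow, Real.sq_sqrt hs.le,
      Real.sq_sqrt hz.le] at this
  have hsplit : -(s + z / s)
      ≤ -(2 * (1 - η) * √z) + (-(η * s) + -(η * (z / s))) := by
    nlinarith
  have hpow := rpow_mul_exp_neg_le hr (show 0 ≤ η * (z / s) by positivity)
  calc Real.exp (-(s + z / s))
      ≤ Real.exp (-(2 * (1 - η) * √z)) * (Real.exp (-(η * s)) * Real.exp (-(η * (z / s)))) := by
        rwa [← Real.exp_add, ← Real.exp_add, Real.exp_le_exp]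
    _ ≤ Real.exp (-(2 * (1 - η) * √z))
          * (Real.exp (-(η * s)) * (r ^ r / (η * (z / s)) ^ r)) := by
        gcongr
        rwa [le_div_iff₀' (by positivity)]
    _ = _ := by
        rw [← Real.div_rpow hr (by positivity), show r / (η * (z / s)) = r / (η * z) * s by field,
          Real.mul_rpow (by positivity) hs.le]
        ring

/-- The integral `∫₀^∞ exp(-s - z/s) s^(b-1) ds`. It equals `2 K̃_{-b}(2 √z)`, see
`besselKt_eq_macdonald`. -/
noncomputable def macdonald (b z : ℝ) : ℝ :=
  ∫ s in Ioi 0, Real.exp (-(s + z / s)) * s ^ (b - 1)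

theorem integrableOn_macdonald (b : ℝ) {z : ℝ} (hz : 0 < z) :
    IntegrableOn (fun s : ℝ ↦ Real.exp (-(s + z / s)) * s ^ (b - 1)) (Ioi 0) := by
  have hdom := (integrableOn_Ioi_rpow_mul_exp_neg_mul (a := |b| + b) (r := 1)
    (by linarith [neg_abs_le b]) one_pos).const_mul (((|b| + 1) / (1 * z)) ^ (|b| + 1))
  refine hdom.mono' (by fun_prop) ((ae_restrict_mem measurableSet_Ioi).mono fun s hs ↦ ?_)
  rw [mem_Ioi] at hs
  rw [Real.norm_of_nonneg (by positivity)]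
  refine (mul_le_mul_of_nonneg_right (exp_neg_add_div_le one_pos le_rfl
    (show 0 ≤ |b| + 1 by positivity) hs hz) (by positivity)).trans_eq ?_
  rw [show |b| + b = |b| + 1 + (b - 1) by ring, Real.rpow_add hs (|b| + 1) (b - 1), sub_self,
    mul_zero, zero_mul, neg_zero, Real.exp_zero]
  ring

theorem macdonald_le {b r η z : ℝ} (hη : 0 < η) (hη1 : η ≤ 1) (hr : 0 ≤ r) (hrb : 0 < r + b)
    (hz : 0 < z) :
    macdonald b z ≤ (r / (η * z)) ^ r * Real.exp (-(2 * (1 - η) * √z))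
      * ((1 / η) ^ (r + b) * Real.Gamma (r + b)) := by
  rw [← Real.integral_rpow_mul_exp_neg_mul_Ioi hrb hη, ← integral_const_mul]
  refine setIntegral_mono_on (integrableOn_macdonald b hz)
    ((integrableOn_Ioi_rpow_mul_exp_neg_mul (by linarith) hη).const_mul _) measurableSet_Ioi
    fun s hs ↦ ?_
  refine (mul_le_mul_of_nonneg_right (exp_neg_add_div_le hη hη1 hr hs hz)
    (Real.rpow_nonneg (le_of_lt hs) _)).trans_eq ?_
  rw [show r + b - 1 = r + (b - 1) by ring, Real.rpow_add hs]
  ring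

theorem macdonald_nonneg (b z : ℝ) : 0 ≤ macdonald b z :=
  setIntegral_nonneg measurableSet_Ioi fun s (hs : 0 < s) ↦ by positivity

theorem hasDerivAt_macdonald (b : ℝ) {z : ℝ} (hz : 0 < z) :
    HasDerivAt (macdonald b) (-macdonald (b - 1) z) z := by
  have hderiv (s : ℝ) (hs : 0 < s) (y : ℝ) :
      HasDerivAt (fun y ↦ Real.exp (-(s + y / s)) * s ^ (b - 1))
        (-(Real.exp (-(s + y / s)) * s ^ (b - 1 - 1))) y := by
    have := (((hasDerivAt_id y).div_const s).const_add s).fun_neg.exp.mul_const (s ^ (b - 1))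
    refine this.congr_deriv ?_
    rw [Real.rpow_sub_one hs.ne' (b - 1), id_eq]
    ring
  have hbound (s : ℝ) (hs : 0 < s) (y : ℝ) (hy : y ∈ Ioi (z / 2)) :
      ‖-(Real.exp (-(s + y / s)) * s ^ (b - 1 - 1))‖
        ≤ Real.exp (-(s + z / 2 / s)) * s ^ (b - 1 - 1) := by
    rw [norm_neg, Real.norm_of_nonneg (by positivity)]
    gcongr
    exact le_of_lt hy
  have := (hasDerivAt_integral_of_dominated_loc_of_deriv_le (μ := volume.restrict (Ioi 0))
    (F := fun y s ↦ Real.exp (-(s + y / s)) * s ^ (b - 1))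
    (Ioi_mem_nhds (half_lt_self hz)) (Eventually.of_forall fun y ↦ by fun_prop)
    (integrableOn_macdonald b hz) (by fun_prop)
    ((ae_restrict_mem measurableSet_Ioi).mono fun s hs ↦ hbound s hs)
    (integrableOn_macdonald (b - 1) (half_pos hz))
    ((ae_restrict_mem measurableSet_Ioi).mono fun s hs y _ ↦ hderiv s hs y)).2
  rwa [integral_neg] at this

theorem macdonald_eq_rpow_mul_macdonald_neg (b : ℝ) {z : ℝ} (hz : 0 < z) :
    macdonald b z = z ^ b * macdonald (-b) z := by
  let g : ℝ → ℝ := fun x ↦ Real.exp (-(x⁻¹ + z * x)) * x ^ (b - 1)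
  have hscale : macdonald b z = z ^ b * ∫ x in Ioi 0, g x := by
    have := integral_comp_mul_left_Ioi (fun s ↦ Real.exp (-(s + z / s)) * s ^ (b - 1)) 0 hz
    rw [mul_zero, smul_eq_mul, eq_inv_mul_iff_mul_eq₀ hz.ne', ← integral_const_mul] at this
    rw [macdonald, ← this, ← integral_const_mul]
    refine setIntegral_congr_fun measurableSet_Ioi fun x (hx : 0 < x) ↦ ?_
    simp only [g]
    rw [Real.mul_rpow hz.le hx.le, Real.rpow_sub_one hz.ne',
      show z * x + z / (z * x) = x⁻¹ + z * x by field]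
    field
  have hinv : ∫ x in Ioi 0, g x = macdonald (-b) z := by
    rw [← integral_comp_rpow_Ioi g (neg_ne_zero.2 one_ne_zero)]
    refine setIntegral_congr_fun measurableSet_Ioi fun x (hx : 0 < x) ↦ ?_
    simp only [g, smul_eq_mul, abs_neg, abs_one, one_mul, Real.rpow_neg_one, inv_inv]
    rw [mul_left_comm, ← Real.rpow_neg_one x, ← Real.rpow_mul hx.le, ← Real.rpow_add hx,
      Real.rpow_neg_one, div_eq_mul_inv]
    ring_nf
  rw [hscale, hinv]

theorem continuous_macdonald {z : ℝ} (hz : 0 < z) : Continuous fun b ↦ macdonald b z := by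
  refine continuous_iff_continuousAt.2 fun b₀ ↦ ?_
  have hbound (s : ℝ) (hs : 0 < s) (b : ℝ) (hb : b ∈ Ioo (b₀ - 1) (b₀ + 1)) :
      ‖Real.exp (-(s + z / s)) * s ^ (b - 1)‖ ≤ Real.exp (-(s + z / s)) * s ^ (b₀ - 1 - 1)
        + Real.exp (-(s + z / s)) * s ^ (b₀ + 1 - 1) := by
    rw [Real.norm_of_nonneg (by positivity), ← mul_add]
    gcongr
    rcases le_total s 1 with hs1 | hs1
    · exact le_add_of_le_of_nonneg
        (Real.rpow_le_rpow_of_exponent_ge hs hs1 (by linarith [hb.1])) (by positivity)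
    · exact le_add_of_nonneg_of_le (by positivity)
        (Real.rpow_le_rpow_of_exponent_le hs1 (by linarith [hb.2]))
  refine continuousAt_of_dominated (Eventually.of_forall fun b ↦ by fun_prop)
    (Eventually.mono (Ioo_mem_nhds (sub_one_lt b₀) (lt_add_one b₀)) fun b hb ↦ ?_)
    ((integrableOn_macdonald (b₀ - 1) hz).add (integrableOn_macdonald (b₀ + 1) hz)) ?_
  · exact (ae_restrict_mem measurableSet_Ioi).mono fun s hs ↦ hbound s hs b hb
  · refine (ae_restrict_mem measurableSet_Ioi).mono fun s hs ↦ ?_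
    have : Continuous fun b : ℝ ↦ s ^ (b - 1) :=
      continuous_const.rpow (by fun_prop) fun _ ↦ .inl (ne_of_gt hs)
    exact (continuous_const.mul this).continuousAt

theorem tendsto_macdonald {b : ℝ} (hb : 0 < b) :
    Tendsto (macdonald b) (𝓝[>] 0) (𝓝 (Real.Gamma b)) := by
  rw [Real.Gamma_eq_integral hb]
  refine tendsto_integral_filter_of_dominated_convergence
    (fun s ↦ Real.exp (-s) * s ^ (b - 1)) (Eventually.of_forall fun y ↦ by fun_prop) ?_
    (Real.GammaIntegral_convergent hb) ?_
  · filter_upwards [self_mem_nhdsWithin] with z hz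
    refine (ae_restrict_mem measurableSet_Ioi).mono fun s hs ↦ ?_
    rw [mem_Ioi] at hs hz
    rw [Real.norm_of_nonneg (by positivity)]
    gcongr
    have : 0 ≤ z / s := by positivity
    linarith
  · refine Eventually.of_forall fun s ↦ ?_
    have : Continuous fun z : ℝ ↦ Real.exp (-(s + z / s)) * s ^ (b - 1) := by fun_prop
    simpa using (this.tendsto 0).mono_left nhdsWithin_le_nhds

theorem hasDerivAt_rpow_mul_besselClifford (b : ℝ) {z : ℝ} (hz : 0 < z) :
    HasDerivAt (fun z ↦ z ^ b * besselClifford b z) (z ^ (b - 1) * besselClifford (b - 1) z) z := by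
  have hprod := (hasDerivAt_rpow_const (p := b) (.inl hz.ne')).fun_mul
    (hasDerivAt_besselClifford b z)
  refine hprod.congr_deriv ?_
  rw [besselClifford_eq_add (b - 1) z, ← sub_add_cancel b 1, Real.rpow_add_one hz.ne']
  simp only [RCLike.ofReal_real_eq_id, id_eq]
  ring_nf

theorem tendsto_rpow_mul_besselClifford {b : ℝ} (hb : 0 < b) (a : ℝ) :
    Tendsto (fun z : ℝ ↦ z ^ b * besselClifford a z) (𝓝[>] 0) (𝓝 0) := by
  have : Tendsto (fun z : ℝ ↦ z ^ b * besselClifford a z) (𝓝[>] 0) _ :=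
    ((Real.continuousAt_rpow_const 0 b (.inr hb.le)).mul
    (continuous_besselClifford a).continuousAt).tendsto.mono_left (nhdsWithin_le_nhds (s := Ioi 0))
  simpa [Real.zero_rpow hb.ne'] using this

theorem tendsto_besselClifford (a : ℝ) :
    Tendsto (besselClifford a) (𝓝[>] (0 : ℝ)) (𝓝 (Real.Gamma (a + 1))⁻¹) := by
  rw [← besselClifford_zero]
  exact ((continuous_besselClifford a).tendsto 0).mono_left nhdsWithin_le_nhds

theorem eq_zero_of_hasDerivAt_zero_of_tendsto {F : ℝ → ℝ} (hF : ∀ z > 0, HasDerivAt F 0 z)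
    (hF0 : Tendsto F (𝓝[>] 0) (𝓝 0)) {z : ℝ} (hz : 0 < z) : F z = 0 := by
  refine tendsto_nhds_unique (Tendsto.congr' ?_ tendsto_const_nhds) hF0
  filter_upwards [self_mem_nhdsWithin] with y hy
  exact isOpen_Ioi.is_const_of_deriv_eq_zero isPreconnected_Ioi
    (fun x hx ↦ (hF x hx).differentiableAt.differentiableWithinAt) (fun x hx ↦ (hF x hx).deriv)
    hz hy

/-- A family `f b` of functions on `(0, ∞)` subject to the relations which determine the functions
`2 (x / 2) ^ b K_b(x)` of `z = x² / 4` up to their behaviour at the origin. -/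
structure IsMacdonaldFamily (f : ℝ → ℝ → ℝ) : Prop where
  hasDerivAt (b : ℝ) {z : ℝ} (hz : 0 < z) : HasDerivAt (f b) (-f (b - 1) z) z
  eq_rpow_mul_neg (b : ℝ) {z : ℝ} (hz : 0 < z) : f b z = z ^ b * f (-b) z

namespace IsMacdonaldFamily

variable {f g : ℝ → ℝ → ℝ}

theorem sub (hf : IsMacdonaldFamily f) (hg : IsMacdonaldFamily g) :
    IsMacdonaldFamily fun b z ↦ f b z - g b z where
  hasDerivAt b _ hz := ((hf.hasDerivAt b hz).fun_sub (hg.hasDerivAt b hz)).congr_deriv (by ring)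
  eq_rpow_mul_neg b _ hz := by
    rw [hf.eq_rpow_mul_neg b hz, hg.eq_rpow_mul_neg b hz, mul_sub]

theorem add_one (hf : IsMacdonaldFamily f) (b : ℝ) {z : ℝ} (hz : 0 < z) :
    f (b + 1) z = b * f b z + z * f (b - 1) z := by
  have hprod := (hasDerivAt_rpow_const (p := b) (.inl hz.ne')).fun_mul (hf.hasDerivAt (-b) hz)
  have heq : f b =ᶠ[𝓝 z] fun y ↦ y ^ b * f (-b) y :=
    Eventually.mono (Ioi_mem_nhds hz) fun y hy ↦ hf.eq_rpow_mul_neg b hy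
  have hderiv := (hf.hasDerivAt b hz).unique (hprod.congr_of_eventuallyEq heq)
  have hz1 : z ^ b = z ^ (b - 1) * z := by rw [← Real.rpow_add_one hz.ne', sub_add_cancel]
  rw [hf.eq_rpow_mul_neg (b + 1) hz, neg_add', Real.rpow_add_one hz.ne', hf.eq_rpow_mul_neg b hz]
  rw [hz1] at hderiv ⊢
  linear_combination z * hderiv

theorem eq_zero_of_tendsto {b : ℝ} (hf : IsMacdonaldFamily f) (hb1 : b < 1)
    (hfb : Tendsto (f b) (𝓝[>] 0) (𝓝 0)) (hfb' : Tendsto (f (1 - b)) (𝓝[>] 0) (𝓝 0)) {z : ℝ}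
    (hz : 0 < z) : f b z = 0 := by
  let p : ℝ → ℝ := besselClifford (-b)
  let q : ℝ → ℝ := fun z ↦ z ^ (1 - b) * besselClifford (1 - b) z
  have hp_pos {z : ℝ} (hz : 0 < z) : 0 < p z := besselClifford_pos (by linarith) hz.le
  have hp0 : Tendsto p (𝓝[>] 0) (𝓝 (Real.Gamma (-b + 1))⁻¹) := tendsto_besselClifford (-b)
  have hf' {z : ℝ} (hz : 0 < z) : HasDerivAt (f b) (-(z ^ (b - 1) * f (1 - b) z)) z := by
    simpa only [hf.eq_rpow_mul_neg (b - 1) hz, neg_sub] using hf.hasDerivAt b hz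
  have hg' {z : ℝ} (hz : 0 < z) : HasDerivAt (f (1 - b)) (-(z ^ (-b) * f b z)) z := by
    have := hf.hasDerivAt (1 - b) hz
    rwa [sub_sub_cancel_left, hf.eq_rpow_mul_neg (-b) hz, neg_neg] at this
  have hp' {z : ℝ} (hz : 0 < z) : HasDerivAt p (z ^ (b - 1) * q z) z := by
    refine (hasDerivAt_besselClifford (-b) z).congr_deriv ?_
    rw [neg_add_eq_sub, ← mul_assoc, ← Real.rpow_add hz]
    simp
  have hq' {z : ℝ} (hz : 0 < z) : HasDerivAt q (z ^ (-b) * p z) z := by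
    simpa only [sub_sub_cancel_left] using hasDerivAt_rpow_mul_besselClifford (1 - b) hz
  have hwronskian {z : ℝ} (hz : 0 < z) : f b z * q z + f (1 - b) z * p z = 0 := by
    refine eq_zero_of_hasDerivAt_zero_of_tendsto (F := fun z ↦ f b z * q z + f (1 - b) z * p z)
      (fun z hz ↦ ?_) ?_ hz
    · refine (((hf' hz).fun_mul (hq' hz)).fun_add ((hg' hz).fun_mul (hp' hz))).congr_deriv ?_
      ring
    · simpa using (hfb.mul (tendsto_rpow_mul_besselClifford (by linarith) _)).add (hfb'.mul hp0)
  have hquot : f b z / p z = 0 := by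
    refine eq_zero_of_hasDerivAt_zero_of_tendsto (F := fun z ↦ f b z / p z) (fun z hz ↦ ?_) ?_ hz
    · refine ((hf' hz).fun_div (hp' hz) (hp_pos hz).ne').congr_deriv ?_
      rw [div_eq_zero_iff]
      left
      linear_combination -(z ^ (b - 1)) * hwronskian hz
    · simpa [Pi.div_def] using hfb.div hp0 (inv_ne_zero (Real.Gamma_pos_of_pos (by linarith)).ne')
  exact (div_eq_zero_iff.1 hquot).resolve_right (hp_pos hz).ne'

theorem eq_zero_of_forall_tendsto (hf : IsMacdonaldFamily f)
    (hf0 : ∀ b, 0 < b → b < 1 → Tendsto (f b) (𝓝[>] 0) (𝓝 0)) {b z : ℝ} (hb : ∀ n : ℤ, b ≠ n)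
    (hz : 0 < z) : f b z = 0 := by
  have hunit {b : ℝ} (hb0 : 0 < b) (hb1 : b < 1) : f b z = 0 :=
    hf.eq_zero_of_tendsto hb1 (hf0 b hb0 hb1) (hf0 _ (by linarith) (by linarith)) hz
  have hup {b : ℝ} (hb0 : 0 < b) (hb1 : b < 1) (n : ℕ) :
      f (b + n - 1) z = 0 ∧ f (b + n) z = 0 := by
    induction n with
    | zero =>
      rw [Nat.cast_zero, add_zero, hf.eq_rpow_mul_neg (b - 1) hz, neg_sub,
        hunit (b := 1 - b) (by linarith) (by linarith), mul_zero]
      exact ⟨rfl, hunit hb0 hb1⟩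
    | succ n ih =>
      rw [Nat.cast_succ, ← add_assoc, add_sub_cancel_right, hf.add_one _ hz, ih.1, ih.2]
      simp
  have hpos {b : ℝ} (hb : ∀ n : ℤ, b ≠ n) (hb0 : 0 < b) : f b z = 0 := by
    have hfract : 0 < Int.fract b := (Int.fract_nonneg b).lt_of_ne' fun h ↦
      hb ⌊b⌋ (sub_eq_zero.1 h)
    have := (hup hfract (Int.fract_lt_one b) ⌊b⌋.toNat).2
    rwa [← Int.cast_natCast, Int.toNat_of_nonneg (Int.floor_nonneg.2 hb0.le),
      Int.fract_add_floor] at this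
  rcases lt_trichotomy b 0 with hb0 | hb0 | hb0
  · rw [hf.eq_rpow_mul_neg b hz, hpos (fun n hn ↦ hb (-n) (by simp [← hn])) (by linarith),
      mul_zero]
  · exact absurd hb0 (by simpa using hb 0)
  · exact hpos hb hb0

end IsMacdonaldFamily

theorem isMacdonaldFamily_macdonald : IsMacdonaldFamily macdonald :=
  ⟨hasDerivAt_macdonald, macdonald_eq_rpow_mul_macdonald_neg⟩

/-- The combination `π / sin(π b) (E_{-b}(z) - z^b E_b(z))` of Bessel–Clifford functions which
expresses `besselK`. -/
noncomputable def macdonaldSeries (b z : ℝ) : ℝ :=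
  π / Real.sin (b * π) * (besselClifford (-b) z - z ^ b * besselClifford b z)

theorem isMacdonaldFamily_macdonaldSeries : IsMacdonaldFamily macdonaldSeries where
  hasDerivAt b z hz := by
    refine (((hasDerivAt_besselClifford (-b) z).fun_sub
      (hasDerivAt_rpow_mul_besselClifford b hz)).const_mul _).congr_deriv ?_
    rw [macdonaldSeries, sub_mul, one_mul, Real.sin_sub_pi, neg_sub, neg_add_eq_sub]
    ring
  eq_rpow_mul_neg b z hz := by
    have : z ^ b * z ^ (-b) = 1 := by rw [← Real.rpow_add hz, add_neg_cancel, Real.rpow_zero]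
    rw [macdonaldSeries, macdonaldSeries, neg_mul, Real.sin_neg, neg_neg, div_neg]
    linear_combination -(π / Real.sin (b * π) * besselClifford (-b) z) * this

theorem tendsto_macdonaldSeries {b : ℝ} (hb0 : 0 < b) (hb1 : b < 1) :
    Tendsto (macdonaldSeries b) (𝓝[>] 0) (𝓝 (Real.Gamma b)) := by
  have hlim := ((tendsto_besselClifford (-b)).sub (tendsto_rpow_mul_besselClifford hb0 b)).const_mul
    (π / Real.sin (b * π))
  have hval : π / Real.sin (b * π) * ((Real.Gamma (-b + 1))⁻¹ - 0) = Real.Gamma b := by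
    rw [sub_zero, neg_add_eq_sub, mul_comm b π, ← Real.Gamma_mul_Gamma_one_sub,
      mul_inv_cancel_right₀ (Real.Gamma_pos_of_pos (by linarith)).ne']
  rw [← hval]
  exact hlim

theorem macdonald_eq_macdonaldSeries {b z : ℝ} (hb : ∀ n : ℤ, b ≠ n) (hz : 0 < z) :
    macdonald b z = macdonaldSeries b z := by
  refine sub_eq_zero.1 ((isMacdonaldFamily_macdonald.sub
    isMacdonaldFamily_macdonaldSeries).eq_zero_of_forall_tendsto (fun b hb0 hb1 ↦ ?_) hb hz)
  simpa using (tendsto_macdonald hb0).sub (tendsto_macdonaldSeries hb0 hb1)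

theorem besselI_eq_rpow_mul_besselClifford (a : ℝ) {x : ℝ} (hx : 0 < x) :
    besselI a x = (x / 2) ^ a * besselClifford a (x ^ 2 / 4) := by
  rw [besselI, ← besselIt_eq_besselClifford, besselIt, ← tsum_mul_left]
  refine tsum_congr fun m ↦ ?_
  rw [add_comm, Real.rpow_add (by positivity), mul_div_assoc]
  norm_cast

theorem eventually_nhdsNE_ne_intCast (b : ℝ) : ∀ᶠ c : ℝ in 𝓝[≠] b, ∀ n : ℤ, c ≠ n := by
  have hnhds : Ioo (⌈b⌉ - 1 : ℝ) (⌊b⌋ + 1) ∈ 𝓝 b :=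
    Ioo_mem_nhds (by linarith [Int.ceil_lt_add_one b]) (Int.lt_floor_add_one b)
  filter_upwards [nhdsWithin_le_nhds hnhds, self_mem_nhdsWithin] with c hc hcb n hn
  rw [hn] at hc
  have hceil : ⌈b⌉ - 1 < n := mod_cast hc.1
  have hfloor : n < ⌊b⌋ + 1 := mod_cast hc.2
  exact hcb (hn.trans (le_antisymm (Int.le_floor.1 (by lia)) (Int.ceil_le.1 (by lia))))

theorem besselK_eq_macdonald (b : ℝ) {x : ℝ} (hx : 0 < x) :
    besselK b x = (x / 2) ^ b * (macdonald (-b) (x ^ 2 / 4) / 2) := by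
  have hz : 0 < x ^ 2 / 4 := by positivity
  have hx2 : 0 < x / 2 := by positivity
  have hpow (c : ℝ) : (x ^ 2 / 4) ^ c = (x / 2) ^ c * (x / 2) ^ c := by
    rw [← Real.mul_rpow hx2.le hx2.le]
    ring_nf
  have hone (c : ℝ) : (x / 2) ^ (-c) * (x / 2) ^ c = 1 := by
    rw [← Real.rpow_add hx2, neg_add_cancel, Real.rpow_zero]
  have hcont : Continuous fun c ↦ (x / 2) ^ (-c) * (macdonald c (x ^ 2 / 4) / 2) :=
    (continuous_const.rpow continuous_neg fun _ ↦ .inl hx2.ne').mul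
      ((continuous_macdonald hz).div_const 2)
  have hval : (x / 2) ^ b * (macdonald (-b) (x ^ 2 / 4) / 2)
      = (x / 2) ^ (-b) * (macdonald b (x ^ 2 / 4) / 2) := by
    rw [macdonald_eq_rpow_mul_macdonald_neg b hz, hpow]
    linear_combination -((x / 2) ^ b * (macdonald (-b) (x ^ 2 / 4) / 2)) * hone b
  rw [hval]
  refine (Tendsto.congr' ?_ (hcont.continuousAt.tendsto.mono_left
    (nhdsWithin_le_nhds (s := {b}ᶜ)))).limUnder_eq
  filter_upwards [eventually_nhdsNE_ne_intCast b] with c hc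
  rw [macdonald_eq_macdonaldSeries hc hz, macdonaldSeries, hpow,
    besselI_eq_rpow_mul_besselClifford _ hx, besselI_eq_rpow_mul_besselClifford _ hx]
  linear_combination -(π / Real.sin (c * π) / 2 * (x / 2) ^ c * besselClifford c (x ^ 2 / 4))
    * hone c

theorem besselKt_eq_macdonald (b : ℝ) {x : ℝ} (hx : 0 < x) :
    besselKt b x = macdonald (-b) (x ^ 2 / 4) / 2 := by
  rw [besselKt, besselK_eq_macdonald b hx, ← mul_assoc, ← Real.rpow_add (by positivity),
    neg_add_cancel, Real.rpow_zero, one_mul]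

end Macdonald

/-! ### Products of Bessel functions as Laplace integrals -/

section ProductFormulas

open Finset.HasAntidiagonal (antidiagonal)

theorem hasSum_sum_antidiagonal_of_prod {f : ℕ × ℕ → ℝ} {s : ℝ} (hf : HasSum f s) :
    HasSum (fun n ↦ ∑ p ∈ antidiagonal n, f p) s := by
  have := (Finset.HasAntidiagonal.sigmaAntidiagonalEquivProd.hasSum_iff.2 hf).sigma
    fun n ↦ hasSum_fintype _
  refine this.congr_fun fun n ↦ ?_
  rw [← Finset.sum_coe_sort]
  rfl

theorem hasSum_besselClifford_mul_exp (a u v : ℝ) :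
    HasSum (fun p : ℕ × ℕ ↦ cliffordCoeff a p.1 * u ^ p.1 * (v ^ p.2 / p.2.factorial))
      (besselClifford a u * Real.exp v) := by
  have hE : HasSum (fun m : ℕ ↦ cliffordCoeff a m * u ^ m) (besselClifford a u) :=
    hasSum_besselClifford a u
  have hexp := hasSum_pow_div_factorial v
  exact HasSum.mul (f := fun m ↦ cliffordCoeff a m * u ^ m) (g := fun j : ℕ ↦ v ^ j / j.factorial)
    hE hexp (summable_mul_of_summable_norm (R := ℝ) hE.summable.norm hexp.summable.norm)

theorem besselClifford_sq_le {b : ℝ} (hb : -1 / 2 ≤ b) (x : ℝ) :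
    besselClifford b (x ^ 2) ≤ Real.exp (2 * |x|) / Real.Gamma (b + 1) := by
  have h := norm_besselClifford_neg_sq_div_four_le hb (2 * x * Complex.I)
  have hsq : -((2 * x * Complex.I) ^ 2 / 4) = ((x ^ 2 : ℝ) : ℂ) := by
    rw [mul_pow, Complex.I_sq]
    push_cast
    ring
  rw [hsq, ← ofReal_besselClifford, Complex.norm_real] at h
  refine (le_abs_self _).trans (h.trans_eq ?_)
  simp [abs_mul]

theorem IsMacdonaldFamily.sum_antidiagonal_cliffordCoeff {f : ℝ → ℝ → ℝ}
    (hf : IsMacdonaldFamily f) {b z : ℝ} (hb : -1 < b) (hz : 0 < z) (m : ℕ) :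
    ∑ p ∈ antidiagonal m,
        (-1) ^ p.1 * cliffordCoeff b p.1 / p.2.factorial * f (b + 2 * p.1 + p.2) z
      = cliffordCoeff b m * (-z) ^ m * f b z := by
  let S : ℕ → ℝ := fun m ↦ ∑ p ∈ antidiagonal m,
    (-1) ^ p.1 * cliffordCoeff b p.1 / p.2.factorial * f (b + 2 * p.1 + p.2) z
  have hrec (m : ℕ) : (m + 1) * (m + 1 + b) * S (m + 1) = -z * S m := by
    have hsplit : (m + 1) * (m + 1 + b) * S (m + 1)
        = ∑ p ∈ antidiagonal (m + 1), (b + 2 * p.1 + p.2) * p.2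
          * ((-1) ^ p.1 * cliffordCoeff b p.1 / p.2.factorial * f (b + 2 * p.1 + p.2) z)
        + ∑ p ∈ antidiagonal (m + 1), p.1 * (p.1 + b)
          * ((-1) ^ p.1 * cliffordCoeff b p.1 / p.2.factorial * f (b + 2 * p.1 + p.2) z) := by
      rw [Finset.mul_sum, ← Finset.sum_add_distrib]
      refine Finset.sum_congr rfl fun p hp ↦ ?_
      have hp : (p.1 : ℝ) + p.2 = m + 1 := mod_cast Finset.HasAntidiagonal.mem_antidiagonal.1 hp
      rw [← hp]
      ring
    rw [hsplit, Finset.Nat.sum_antidiagonal_succ', Finset.Nat.sum_antidiagonal_succ]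
    simp only [Nat.cast_zero, mul_zero, zero_mul, zero_add, ← Finset.sum_add_distrib, S,
      Finset.mul_sum]
    refine Finset.sum_congr rfl fun p _ ↦ ?_
    have hadd := hf.add_one (b + 2 * p.1 + p.2 + 1) hz
    have hcoef := succ_mul_mul_cliffordCoeff_succ b p.1
    rw [add_sub_cancel_right] at hadd
    rw [Nat.factorial_succ, pow_succ]
    push_cast
    rw [show b + 2 * ((p.1 : ℝ) + 1) + p.2 = b + 2 * p.1 + p.2 + 1 + 1 by ring,
      show b + 2 * (p.1 : ℝ) + (p.2 + 1) = b + 2 * p.1 + p.2 + 1 by ring, hadd, ← hcoef]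
    field
  change S m = _
  induction m with
  | zero => simp [S]
  | succ m ih =>
    have hne : ((m : ℝ) + 1) * (m + 1 + b) ≠ 0 := by
      have : 0 < (m : ℝ) + 1 + b := by linarith [m.cast_nonneg (α := ℝ)]
      positivity
    refine mul_left_cancel₀ hne ?_
    rw [hrec, ih, ← succ_mul_mul_cliffordCoeff_succ b m]
    ring

theorem integrableOn_macdonald_mul_besselClifford_mul_exp {b q z : ℝ} (hb : -1 / 2 ≤ b)
    (hq : 0 ≤ q) (hq1 : q ^ 2 + 2 * q < 1) (hz : 0 < z) :
    IntegrableOn (fun s : ℝ ↦ Real.exp (-(s + z / s)) * s ^ (b - 1)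
      * (besselClifford b (q ^ 2 * s ^ 2) * Real.exp (q ^ 2 * s))) (Ioi 0) := by
  have hc : 0 < 1 - (q ^ 2 + 2 * q) := by linarith
  have hΓ : 0 < Real.Gamma (b + 1) := Real.Gamma_pos_of_pos (by linarith)
  refine ((integrableOn_Ioi_rpow_mul_exp_neg_mul (a := b) (by linarith) hc).const_mul
    ((1 / (1 * z)) ^ (1 : ℝ) / Real.Gamma (b + 1))).mono' ?_
    ((ae_restrict_mem measurableSet_Ioi).mono fun s hs ↦ ?_)
  · have := (continuous_besselClifford (𝕜 := ℝ) b).measurable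
    fun_prop
  rw [mem_Ioi] at hs
  have hE := besselClifford_sq_le hb (q * s)
  rw [mul_pow, abs_of_nonneg (by positivity)] at hE
  have hker := exp_neg_add_div_le one_pos le_rfl zero_le_one hs hz
  rw [sub_self, mul_zero, zero_mul, neg_zero, Real.exp_zero, mul_one, Real.rpow_one s,
    one_mul s] at hker
  have hE0 : 0 ≤ besselClifford b (q ^ 2 * s ^ 2) :=
    (besselClifford_pos (by linarith) (by positivity)).le
  rw [Real.norm_of_nonneg (by positivity)]
  calc _ ≤ (1 / (1 * z)) ^ (1 : ℝ) * (s * Real.exp (-s)) * s ^ (b - 1)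
        * (Real.exp (2 * (q * s)) / Real.Gamma (b + 1) * Real.exp (q ^ 2 * s)) := by gcongr
    _ = _ := by
      rw [show -((1 - (q ^ 2 + 2 * q)) * s) = -s + 2 * (q * s) + q ^ 2 * s by ring, Real.exp_add,
        Real.exp_add, Real.rpow_sub_one hs.ne']
      field

theorem hasSum_macdonald_mul_cliffordCoeff {b q z : ℝ} (hb : -1 / 2 ≤ b) (hq : 0 ≤ q)
    (hq1 : q ^ 2 + 2 * q < 1) (hz : 0 < z) :
    HasSum (fun p : ℕ × ℕ ↦ (q ^ 2) ^ (p.1 + p.2)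
      * ((-1) ^ p.1 * cliffordCoeff b p.1 / p.2.factorial * macdonald (b + 2 * p.1 + p.2) z))
      (∫ s in Ioi 0, Real.exp (-(s + z / s)) * s ^ (b - 1)
        * (besselClifford b (-(q ^ 2 * s ^ 2)) * Real.exp (q ^ 2 * s))) := by
  let term (σ : ℝ) (p : ℕ × ℕ) (s : ℝ) : ℝ := Real.exp (-(s + z / s)) * s ^ (b - 1)
    * (cliffordCoeff b p.1 * (σ * (q ^ 2 * s ^ 2)) ^ p.1 * ((q ^ 2 * s) ^ p.2 / p.2.factorial))
  have hterm (σ s : ℝ) : HasSum (fun p ↦ term σ p s) (Real.exp (-(s + z / s)) * s ^ (b - 1)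
      * (besselClifford b (σ * (q ^ 2 * s ^ 2)) * Real.exp (q ^ 2 * s))) :=
    (hasSum_besselClifford_mul_exp b _ _).mul_left _
  have hnorm (p : ℕ × ℕ) (s : ℝ) (hs : 0 < s) : ‖term (-1) p s‖ ≤ term 1 p s := by
    have := cliffordCoeff_pos (by linarith : -1 < b) p.1
    have hsign : term (-1) p s = (-1) ^ p.1 * term 1 p s := by
      simp only [term, mul_pow _ (q ^ 2 * s ^ 2)]
      ring
    have hnonneg : 0 ≤ term 1 p s := by
      simp only [term]
      positivity
    rw [hsign, norm_mul, norm_pow, norm_neg, norm_one, one_pow, one_mul,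
      Real.norm_of_nonneg hnonneg]
  have hdom := hasSum_integral_of_dominated_convergence (μ := volume.restrict (Ioi 0)) (term 1)
    (fun p ↦ by simp only [term]; fun_prop)
    (fun p ↦ (ae_restrict_mem measurableSet_Ioi).mono fun s hs ↦ hnorm p s hs)
    (Eventually.of_forall fun s ↦ (hterm 1 s).summable)
    (by
      simp only [(hterm 1 _).tsum_eq, one_mul]
      exact integrableOn_macdonald_mul_besselClifford_mul_exp hb hq hq1 hz)
    (Eventually.of_forall (hterm (-1)))
  simp only [neg_one_mul] at hdom
  refine hdom.congr_fun fun p ↦ ?_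
  rw [macdonald, ← integral_const_mul, ← integral_const_mul]
  refine setIntegral_congr_fun measurableSet_Ioi fun s (hs : 0 < s) ↦ ?_
  simp only [term]
  rw [show b + 2 * (p.1 : ℝ) + p.2 - 1 = b - 1 + (2 * p.1 + p.2 : ℕ) by push_cast; ring,
    Real.rpow_add_natCast hs.ne']
  ring

theorem integral_exp_mul_besselClifford_eq_macdonald_mul {b q z : ℝ} (hb : -1 / 2 ≤ b)
    (hq : 0 ≤ q) (hq1 : q ^ 2 + 2 * q < 1) (hz : 0 < z) :
    ∫ s in Ioi 0, Real.exp (-(s + z / s)) * s ^ (b - 1)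
        * (besselClifford b (-(q ^ 2 * s ^ 2)) * Real.exp (q ^ 2 * s))
      = macdonald b z * besselClifford b (-(q ^ 2 * z)) := by
  have hdouble := hasSum_sum_antidiagonal_of_prod (hasSum_macdonald_mul_cliffordCoeff hb hq hq1 hz)
  have hsingle := (hasSum_besselClifford b (-(q ^ 2 * z))).mul_left (macdonald b z)
  refine hdouble.unique (hsingle.congr_fun fun m ↦ ?_)
  have hm := isMacdonaldFamily_macdonald.sum_antidiagonal_cliffordCoeff
    (by linarith : -1 < b) hz m
  calc _ = (q ^ 2) ^ m * (cliffordCoeff b m * (-z) ^ m * macdonald b z) := by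
        rw [← hm, Finset.mul_sum]
        refine Finset.sum_congr rfl fun p hp ↦ ?_
        rw [Finset.HasAntidiagonal.mem_antidiagonal.1 hp]
    _ = _ := by
        rw [neg_mul_eq_mul_neg, mul_pow, RCLike.ofReal_real_eq_id, id_eq]
        ring

/-- The coefficient of `A^m B^n` in Weber's integral
`∫₀^∞ y^a e^{-y} E_a(Ay) E_a(By) dy`, where `E_a` is `besselClifford a` and `p = (m, n)`. -/
noncomputable def weberCoeff (a : ℝ) (p : ℕ × ℕ) : ℝ :=
  cliffordCoeff a p.1 * cliffordCoeff a p.2 * Real.Gamma (a + 1 + p.1 + p.2)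

theorem weberCoeff_pos {a : ℝ} (ha : -1 < a) (p : ℕ × ℕ) : 0 < weberCoeff a p :=
  mul_pos (mul_pos (cliffordCoeff_pos ha _) (cliffordCoeff_pos ha _)) (Real.Gamma_pos_of_pos (by
    linarith [p.1.cast_nonneg (α := ℝ), p.2.cast_nonneg (α := ℝ)]))

theorem weberCoeff_eq_sum_antidiagonal {a : ℝ} (ha : -1 < a) (m n : ℕ) :
    weberCoeff a (m, n)
      = ∑ p ∈ antidiagonal m,
        cliffordCoeff a p.1 / p.2.factorial * (n.descFactorial p.1 / n.factorial) := by
  have hΓ (k : ℕ) : 0 < a + 1 + k := by linarith [k.cast_nonneg (α := ℝ)]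
  have hvandermonde := Ring.add_choose_eq m (Nat.cast_commute n (a + m))
  have hterm (p : ℕ × ℕ) (hp : p ∈ antidiagonal m) :
      cliffordCoeff a p.1 / p.2.factorial * (n.descFactorial p.1 / n.factorial)
        = Ring.choose (n : ℝ) p.1 * Ring.choose (a + m) p.2
          / (n.factorial * Real.Gamma (a + 1 + m)) := by
    obtain ⟨i, j⟩ := p
    obtain rfl : i + j = m := Finset.HasAntidiagonal.mem_antidiagonal.1 hp
    have hij := Gamma_add_natCast (hΓ i) j
    have hpos := (Real.Gamma_pos_of_pos (hΓ i)).ne'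
    have hpos' := (Real.Gamma_pos_of_pos (hΓ (i + j))).ne'
    rw [show a + 1 + (i : ℝ) + j = a + 1 + (i + j : ℕ) by push_cast; ring,
      show a + 1 + ((i + j : ℕ) : ℝ) - 1 = a + (i + j : ℕ) by ring] at hij
    rw [Ring.choose_natCast, Nat.descFactorial_eq_factorial_mul_choose, cliffordCoeff,
      show (i : ℝ) + a + 1 = a + 1 + i by ring]
    push_cast at hij hpos' ⊢
    rw [hij] at hpos' ⊢
    generalize Ring.choose (a + (i + j : ℝ)) j = c at hpos' ⊢
    have hc : c ≠ 0 := right_ne_zero_of_mul (left_ne_zero_of_mul hpos')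
    field
  rw [Finset.sum_congr rfl hterm, ← Finset.sum_div, ← hvandermonde]
  have hleft := Gamma_add_natCast (hΓ n) m
  have hpos := (Real.Gamma_pos_of_pos (hΓ n)).ne'
  have hpos' := (Real.Gamma_pos_of_pos (hΓ m)).ne'
  rw [weberCoeff, cliffordCoeff, cliffordCoeff, show (m : ℝ) + a + 1 = a + 1 + m by ring,
    show (n : ℝ) + a + 1 = a + 1 + n by ring, add_right_comm (a + 1), hleft,
    show a + 1 + (n : ℝ) + m - 1 = n + (a + m) by ring]
  field

theorem hasSum_descFactorial_mul_pow_div_factorial (x : ℝ) (k : ℕ) :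
    HasSum (fun n : ℕ ↦ n.descFactorial k / n.factorial * x ^ n) (x ^ k * Real.exp x) := by
  have hzero : ∑ n ∈ Finset.range k, (n.descFactorial k / n.factorial * x ^ n : ℝ) = 0 :=
    Finset.sum_eq_zero fun n hn ↦ by
      rw [Nat.descFactorial_of_lt (Finset.mem_range.1 hn), Nat.cast_zero, zero_div, zero_mul]
  rw [← hasSum_nat_add_iff' k, hzero, sub_zero]
  refine ((hasSum_pow_div_factorial x).mul_left (x ^ k)).congr_fun fun n ↦ ?_
  rw [← Nat.factorial_mul_descFactorial (Nat.le_add_left k n), Nat.add_sub_cancel]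
  have := Nat.pos_of_ne_zero fun h ↦
    (Nat.descFactorial_eq_zero_iff_lt.1 h).not_ge (Nat.le_add_left k n)
  push_cast
  rw [pow_add]
  field

theorem hasSum_weberCoeff_mul_pow {a : ℝ} (ha : -1 < a) (A B : ℝ) (m : ℕ) :
    HasSum (fun n : ℕ ↦ weberCoeff a (m, n) * (A ^ m * B ^ n)) (∑ p ∈ antidiagonal m,
      cliffordCoeff a p.1 * (A * B) ^ p.1 * (A ^ p.2 / p.2.factorial) * Real.exp B) := by
  have h := hasSum_sum fun (p : ℕ × ℕ) (_ : p ∈ antidiagonal m) ↦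
    (hasSum_descFactorial_mul_pow_div_factorial B p.1).mul_left
    (cliffordCoeff a p.1 / p.2.factorial * A ^ m)
  have hval : ∑ p ∈ antidiagonal m, cliffordCoeff a p.1 / p.2.factorial * A ^ m
        * (B ^ p.1 * Real.exp B) = ∑ p ∈ antidiagonal m,
        cliffordCoeff a p.1 * (A * B) ^ p.1 * (A ^ p.2 / p.2.factorial) * Real.exp B :=
    Finset.sum_congr rfl fun p hp ↦ by
      rw [← Finset.HasAntidiagonal.mem_antidiagonal.1 hp]
      ring
  rw [hval] at h
  refine h.congr_fun fun n ↦ ?_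
  rw [weberCoeff_eq_sum_antidiagonal ha, Finset.sum_mul]
  exact Finset.sum_congr rfl fun p _ ↦ by ring

theorem norm_weberCoeff_mul_pow_mul_pow {a : ℝ} (ha : -1 < a) (A B : ℝ) (p : ℕ × ℕ) :
    ‖weberCoeff a p * (A ^ p.1 * B ^ p.2)‖ = weberCoeff a p * (|A| ^ p.1 * |B| ^ p.2) := by
  rw [norm_mul, Real.norm_of_nonneg (weberCoeff_pos ha p).le, norm_mul, norm_pow, norm_pow,
    Real.norm_eq_abs, Real.norm_eq_abs]

theorem hasSum_weberCoeff_mul_pow_mul_pow {a : ℝ} (ha : -1 < a) (A B : ℝ) :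
    HasSum (fun p : ℕ × ℕ ↦ weberCoeff a p * (A ^ p.1 * B ^ p.2))
      (Real.exp (A + B) * besselClifford a (A * B)) := by
  have hfiber (A B : ℝ) := hasSum_sum_antidiagonal_of_prod
    ((hasSum_besselClifford_mul_exp a (A * B) A).mul_right (Real.exp B))
  have hsummable : Summable fun p : ℕ × ℕ ↦ weberCoeff a p * (A ^ p.1 * B ^ p.2) := by
    refine Summable.of_norm ((summable_prod_of_nonneg fun p ↦ norm_nonneg _).2 ?_)
    simp only [norm_weberCoeff_mul_pow_mul_pow ha,
      (hasSum_weberCoeff_mul_pow ha |A| |B| _).tsum_eq]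
    exact ⟨fun m ↦ (hasSum_weberCoeff_mul_pow ha |A| |B| m).summable, (hfiber |A| |B|).summable⟩
  rw [Real.exp_add, mul_comm, ← mul_assoc,
    (hfiber A B).unique (hsummable.hasSum.prod_fiberwise (hasSum_weberCoeff_mul_pow ha A B))]
  exact hsummable.hasSum

theorem integrableOn_rpow_mul_exp_neg_mul_pow {a : ℝ} (ha : -1 < a) (n : ℕ) :
    IntegrableOn (fun y : ℝ ↦ y ^ a * Real.exp (-y) * y ^ n) (Ioi 0) := by
  refine (integrableOn_congr_fun (fun y (hy : 0 < y) ↦ ?_) measurableSet_Ioi).2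
    (Real.GammaIntegral_convergent (s := a + n + 1) (by linarith [n.cast_nonneg (α := ℝ)]))
  rw [add_sub_cancel_right, Real.rpow_add_natCast hy.ne', mul_right_comm, mul_comm]

theorem integral_rpow_mul_exp_neg_mul_pow {a : ℝ} (ha : -1 < a) (n : ℕ) :
    ∫ y in Ioi 0, y ^ a * Real.exp (-y) * y ^ n = Real.Gamma (a + n + 1) := by
  rw [Real.Gamma_eq_integral (by linarith [n.cast_nonneg (α := ℝ)])]
  refine setIntegral_congr_fun measurableSet_Ioi fun y (hy : 0 < y) ↦ ?_
  rw [add_sub_cancel_right, Real.rpow_add_natCast hy.ne', mul_right_comm, mul_comm]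

/-- Weber's second exponential integral. -/
theorem integral_exp_mul_besselClifford_mul_besselClifford {a : ℝ} (ha : -1 < a) (A B : ℝ) :
    ∫ y in Ioi 0, y ^ a * Real.exp (-y) * besselClifford a (A * y) * besselClifford a (B * y)
      = Real.exp (A + B) * besselClifford a (A * B) := by
  let term (A B : ℝ) (p : ℕ × ℕ) (y : ℝ) : ℝ := cliffordCoeff a p.1 * cliffordCoeff a p.2
    * (A ^ p.1 * B ^ p.2) * (y ^ a * Real.exp (-y) * y ^ (p.1 + p.2))
  have hintegrable (p : ℕ × ℕ) : IntegrableOn (term A B p) (Ioi 0) :=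
    (integrableOn_rpow_mul_exp_neg_mul_pow ha _).const_mul _
  have hintegral (A B : ℝ) (p : ℕ × ℕ) :
      ∫ y in Ioi 0, term A B p y = weberCoeff a p * (A ^ p.1 * B ^ p.2) := by
    rw [integral_const_mul, integral_rpow_mul_exp_neg_mul_pow ha, weberCoeff,
      add_right_comm _ _ (1 : ℝ), Nat.cast_add, ← add_assoc]
    ring
  have hnorm (p : ℕ × ℕ) : EqOn (fun y ↦ ‖term A B p y‖) (term |A| |B| p) (Ioi 0) :=
    fun y (hy : 0 < y) ↦ by
      simp only [term, Real.norm_eq_abs, abs_mul, abs_pow, abs_of_pos hy, Real.abs_exp,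
        abs_of_pos (cliffordCoeff_pos ha _), Real.abs_rpow_of_nonneg hy.le]
  have hsum := hasSum_integral_of_summable_integral_norm hintegrable (by
    simp only [setIntegral_congr_fun measurableSet_Ioi (hnorm _), hintegral]
    exact (hasSum_weberCoeff_mul_pow_mul_pow ha |A| |B|).summable)
  simp only [hintegral] at hsum
  rw [← hsum.unique (hasSum_weberCoeff_mul_pow_mul_pow ha A B)]
  refine setIntegral_congr_fun measurableSet_Ioi fun y _ ↦ ?_
  have hE (u : ℝ) : HasSum (fun m ↦ cliffordCoeff a m * (u * y) ^ m) (besselClifford a (u * y)) :=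
    hasSum_besselClifford a (u * y)
  have hprod := HasSum.mul (f := fun m ↦ cliffordCoeff a m * (A * y) ^ m)
    (g := fun m ↦ cliffordCoeff a m * (B * y) ^ m) (hE A) (hE B)
    (summable_mul_of_summable_norm (R := ℝ) (hE A).summable.norm (hE B).summable.norm)
  rw [mul_assoc, ← (hprod.mul_left _).tsum_eq]
  refine tsum_congr fun p ↦ ?_
  simp only [term]
  ring

end ProductFormulas

/-! ### Reduction to a single Laplace integral -/

section Reduction

/-- The weight `y^a E_a(t² y) h_b(y)`, where `E_a` is `besselClifford a` and `h_b` is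
`macdonald b`; after the substitution `x = 2 (1 - t) √y` it is the kernel against which the
generating function integrates `J̃_a J̃_b`. -/
noncomputable def besselWeight (a b t y : ℝ) : ℝ :=
  y ^ a * besselClifford a (t ^ 2 * y) * macdonald b y

theorem integral_besselIt_mul_besselKt_mul_besselJt_mul_besselJt (a b p q : ℝ) {t : ℝ}
    (ht : t < 1) :
    ∫ x in Ioi 0, besselIt a (t * x / (1 - t)) * besselKt b (x / (1 - t)) * besselJt a (p * x)
        * besselJt b (q * x) * x ^ (2 * (a + b) + 1)
      = 4 ^ (a + b) * (1 - t) ^ (2 * (a + b + 1)) * ∫ y in Ioi 0, besselWeight a b t y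
        * (besselClifford a (-((p * (1 - t)) ^ 2 * y))
          * besselClifford b (-((q * (1 - t)) ^ 2 * y))) := by
  have h1t : 0 < 1 - t := by linarith
  have hscale (f : ℝ → ℝ) := integral_comp_mul_left_Ioi' f 0 (b := 2 * (1 - t)) (by positivity)
  simp only [mul_zero] at hscale
  conv_rhs => rw [← integral_comp_rpow_Ioi_of_pos two_pos, ← integral_const_mul]
  rw [← hscale, smul_eq_mul, ← integral_const_mul]
  refine setIntegral_congr_fun measurableSet_Ioi fun v (hv : 0 < v) ↦ ?_
  have hv' : 2 * (1 - t) * v / (1 - t) = 2 * v := by field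
  have hpow : (2 * (1 - t) * v) ^ (2 * (a + b) + 1)
      = 4 ^ (a + b) * (1 - t) ^ (2 * (a + b + 1)) / (1 - t) * 2 * v
        * ((v ^ 2) ^ a * (v ^ 2) ^ b) := by
    rw [← Real.rpow_add (by positivity), Real.rpow_add_one (by positivity),
      Real.mul_rpow (by positivity) hv.le, Real.mul_rpow two_pos.le h1t.le, mul_add_one 2,
      Real.rpow_add h1t, Real.rpow_mul two_pos.le, Real.rpow_mul hv.le]
    norm_num
    field
  simp only [besselIt_eq_besselClifford, besselJt_eq_besselClifford, besselWeight, smul_eq_mul,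
    hpow, hv', Real.rpow_ofNat, show (2 : ℝ) - 1 = 1 by norm_num, Real.rpow_one]
  rw [show (t * (2 * (1 - t) * v) / (1 - t)) ^ 2 / 4 = t ^ 2 * v ^ 2 by field,
    besselKt_eq_macdonald b (by positivity), show (2 * v) ^ 2 / 4 = v ^ 2 by ring,
    macdonald_eq_rpow_mul_macdonald_neg b (pow_pos hv 2),
    show (p * (2 * (1 - t) * v)) ^ 2 / 4 = (p * (1 - t)) ^ 2 * v ^ 2 by ring,
    show (q * (2 * (1 - t) * v)) ^ 2 / 4 = (q * (1 - t)) ^ 2 * v ^ 2 by ring]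
  field

theorem abs_besselClifford_neg_le {a x : ℝ} (ha : -1 / 2 ≤ a) (hx : 0 ≤ x) :
    |besselClifford a (-x)| ≤ (Real.Gamma (a + 1))⁻¹ := by
  have h := norm_besselClifford_neg_sq_div_four_le ha (2 * √x : ℝ)
  have hsq : -(((2 * √x : ℝ) : ℂ) ^ 2 / 4) = ((-x : ℝ) : ℂ) := by
    rw [← Complex.ofReal_pow, mul_pow, Real.sq_sqrt hx]
    push_cast
    ring
  rwa [hsq, ← ofReal_besselClifford, Complex.norm_real, Complex.ofReal_im, abs_zero, Real.exp_zero,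
    one_div] at h

theorem integral_exp_neg_div_mul_besselClifford_mul_besselClifford {a : ℝ} (ha : -1 < a)
    (A B : ℝ) {s : ℝ} (hs : 0 < s) :
    ∫ y in Ioi 0, y ^ a * Real.exp (-(y / s)) * besselClifford a (A * y) * besselClifford a (B * y)
      = s ^ (a + 1) * (Real.exp ((A + B) * s) * besselClifford a (A * B * s ^ 2)) := by
  have hscale := integral_comp_mul_left_Ioi' (fun y ↦ y ^ a * Real.exp (-(y / s))
    * besselClifford a (A * y) * besselClifford a (B * y)) 0 hs
  rw [mul_zero] at hscale
  rw [← hscale, smul_eq_mul, ← integral_const_mul,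
    show A * B * s ^ 2 = A * s * (B * s) by ring, add_mul,
    ← integral_exp_mul_besselClifford_mul_besselClifford ha, ← integral_const_mul]
  refine setIntegral_congr_fun measurableSet_Ioi fun y (hy : 0 < y) ↦ ?_
  rw [Real.mul_rpow hs.le hy.le, mul_div_cancel_left₀ y hs.ne', Real.rpow_add_one hs.ne',
    ← mul_assoc A, ← mul_assoc B]
  ring

theorem integral_exp_neg_div_mul_besselClifford {a : ℝ} (ha : -1 < a) (A : ℝ) {s : ℝ}
    (hs : 0 < s) :
    ∫ y in Ioi 0, y ^ a * Real.exp (-(y / s)) * besselClifford a (A * y)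
      = s ^ (a + 1) * Real.exp (A * s) := by
  have hweber := integral_exp_neg_div_mul_besselClifford_mul_besselClifford ha A 0 hs
  have := Real.Gamma_pos_of_pos (by linarith : 0 < a + 1)
  simp only [zero_mul, mul_zero, add_zero, besselClifford_zero, integral_mul_const,
    ← mul_assoc] at hweber
  exact mul_right_cancel₀ (inv_pos.2 this).ne' hweber

theorem integrableOn_rpow_mul_exp_neg_div_mul_besselClifford {a : ℝ} (ha : -1 < a) (A : ℝ) {s : ℝ}
    (hs : 0 < s) :
    IntegrableOn (fun y ↦ y ^ a * Real.exp (-(y / s)) * besselClifford a (A * y)) (Ioi 0) := by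
  refine Integrable.of_integral_ne_zero ?_
  rw [integral_exp_neg_div_mul_besselClifford ha A hs]
  positivity

theorem integrable_prod_rpow_mul_besselClifford_mul_exp {a b q t : ℝ} (ha : -1 < a)
    (hab : -1 < a + b) (htq : t ^ 2 + q ^ 2 < 1) :
    Integrable (fun y : ℝ × ℝ ↦ y.1 ^ a * Real.exp (-(y.1 / y.2)) * besselClifford a (t ^ 2 * y.1)
      * (Real.exp (-((1 - q ^ 2) * y.2)) * y.2 ^ (b - 1)))
      ((volume.restrict (Ioi 0)).prod (volume.restrict (Ioi 0))) := by
  have hmeas := (continuous_besselClifford (𝕜 := ℝ) a).measurable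
  refine (integrable_prod_iff' (by fun_prop)).2
    ⟨(ae_restrict_mem measurableSet_Ioi).mono fun s hs ↦ by
      exact (integrableOn_rpow_mul_exp_neg_div_mul_besselClifford ha (t ^ 2) hs).mul_const
        (Real.exp (-((1 - q ^ 2) * s)) * s ^ (b - 1)), ?_⟩
  refine (integrableOn_congr_fun (fun s (hs : 0 < s) ↦ ?_) measurableSet_Ioi).2
    (integrableOn_Ioi_rpow_mul_exp_neg_mul hab (sub_pos.2 htq))
  have hnorm : EqOn (fun y ↦ ‖y ^ a * Real.exp (-(y / s)) * besselClifford a (t ^ 2 * y)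
      * (Real.exp (-((1 - q ^ 2) * s)) * s ^ (b - 1))‖) (fun y ↦ y ^ a * Real.exp (-(y / s))
      * besselClifford a (t ^ 2 * y) * (Real.exp (-((1 - q ^ 2) * s)) * s ^ (b - 1))) (Ioi 0) :=
    fun y (hy : 0 < y) ↦ by
      have : 0 ≤ besselClifford a (t ^ 2 * y) := (besselClifford_pos ha (by positivity)).le
      exact Real.norm_of_nonneg (by positivity)
  simp only [setIntegral_congr_fun measurableSet_Ioi hnorm, integral_mul_const,
    integral_exp_neg_div_mul_besselClifford ha _ hs]
  rw [show -((1 - (t ^ 2 + q ^ 2)) * s) = t ^ 2 * s + -((1 - q ^ 2) * s) by ring, Real.exp_add,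
    show a + b = a + 1 + (b - 1) by ring, Real.rpow_add hs (a + 1)]
  ring

theorem integrable_prod_besselClifford_mul_besselClifford {a b q t : ℝ} (p : ℝ)
    (ha : -1 / 2 ≤ a) (hb : -1 / 2 ≤ b) (hab : -1 < a + b) (htq : t ^ 2 + q ^ 2 < 1) :
    Integrable (Function.uncurry fun y s : ℝ ↦ y ^ a * Real.exp (-(y / s))
      * besselClifford a (t ^ 2 * y) * besselClifford a (-(p ^ 2) * y) * (Real.exp (-s)
      * s ^ (b - 1) * (besselClifford b (-(q ^ 2 * s ^ 2)) * Real.exp (q ^ 2 * s))))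
      ((volume.restrict (Ioi 0)).prod (volume.restrict (Ioi 0))) := by
  have := (continuous_besselClifford (𝕜 := ℝ) a).measurable
  have := (continuous_besselClifford (𝕜 := ℝ) b).measurable
  refine ((integrable_prod_rpow_mul_besselClifford_mul_exp (by linarith : -1 < a) hab htq).const_mul
    ((Real.Gamma (a + 1))⁻¹ * (Real.Gamma (b + 1))⁻¹)).mono' (by fun_prop) ?_
  rw [Measure.prod_restrict]
  filter_upwards [ae_restrict_mem (measurableSet_Ioi.prod measurableSet_Ioi)] with
    ⟨y, s⟩ ⟨(hy : 0 < y), (hs : 0 < s)⟩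
  have hΓ : 0 < Real.Gamma (a + 1) := Real.Gamma_pos_of_pos (by linarith)
  have hEt : 0 ≤ besselClifford a (t ^ 2 * y) :=
    (besselClifford_pos (by linarith) (by positivity)).le
  have hEa := abs_besselClifford_neg_le ha (by positivity : 0 ≤ p ^ 2 * y)
  have hEb := abs_besselClifford_neg_le hb (by positivity : 0 ≤ q ^ 2 * s ^ 2)
  calc _ = y ^ a * Real.exp (-(y / s)) * besselClifford a (t ^ 2 * y)
        * (Real.exp (-s) * s ^ (b - 1) * Real.exp (q ^ 2 * s))
        * (|besselClifford a (-(p ^ 2 * y))| * |besselClifford b (-(q ^ 2 * s ^ 2))|) := by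
        simp only [Function.uncurry, Real.norm_eq_abs, abs_mul, Real.abs_exp, abs_of_nonneg hEt,
          neg_mul, abs_of_pos (Real.rpow_pos_of_pos hy _), abs_of_pos (Real.rpow_pos_of_pos hs _)]
        ring
    _ ≤ y ^ a * Real.exp (-(y / s)) * besselClifford a (t ^ 2 * y)
        * (Real.exp (-s) * s ^ (b - 1) * Real.exp (q ^ 2 * s))
        * ((Real.Gamma (a + 1))⁻¹ * (Real.Gamma (b + 1))⁻¹) := by gcongr
    _ = _ := by
        rw [show -((1 - q ^ 2) * s) = -s + q ^ 2 * s by ring, Real.exp_add]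
        ring

theorem integral_besselWeight_mul_besselClifford_mul_besselClifford {a b p q t : ℝ}
    (ha : -1 / 2 ≤ a) (hb : -1 / 2 ≤ b) (hab : -1 < a + b) (hq : q ^ 2 + 2 * |q| < 1)
    (htq : t ^ 2 + q ^ 2 < 1) :
    ∫ y in Ioi 0, besselWeight a b t y * (besselClifford a (-(p ^ 2 * y))
        * besselClifford b (-(q ^ 2 * y)))
      = ∫ s in Ioi 0, s ^ (a + b) * Real.exp (-((1 - t ^ 2 + p ^ 2 - q ^ 2) * s))
        * (besselClifford a (-(t ^ 2 * p ^ 2 * s ^ 2))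
          * besselClifford b (-(q ^ 2 * s ^ 2))) := by
  let F (y s : ℝ) : ℝ := y ^ a * Real.exp (-(y / s)) * besselClifford a (t ^ 2 * y)
    * besselClifford a (-(p ^ 2) * y)
    * (Real.exp (-s) * s ^ (b - 1) * (besselClifford b (-(q ^ 2 * s ^ 2)) * Real.exp (q ^ 2 * s)))
  calc ∫ y in Ioi 0, besselWeight a b t y * (besselClifford a (-(p ^ 2 * y))
          * besselClifford b (-(q ^ 2 * y)))
      = ∫ y in Ioi 0, ∫ s in Ioi 0, F y s := by
        refine setIntegral_congr_fun measurableSet_Ioi fun y (hy : 0 < y) ↦ ?_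
        have hKJ := integral_exp_mul_besselClifford_eq_macdonald_mul hb (abs_nonneg q)
          (by rwa [sq_abs]) hy
        rw [sq_abs] at hKJ
        rw [besselWeight, mul_mul_mul_comm, ← hKJ, ← integral_const_mul]
        refine setIntegral_congr_fun measurableSet_Ioi fun s _ ↦ ?_
        simp only [F, neg_add, Real.exp_add, neg_mul]
        ring
    _ = ∫ s in Ioi 0, ∫ y in Ioi 0, F y s :=
      integral_integral_swap
        (integrable_prod_besselClifford_mul_besselClifford p ha hb hab htq)
    _ = _ := by
        refine setIntegral_congr_fun measurableSet_Ioi fun s (hs : 0 < s) ↦ ?_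
        have hweber := integral_exp_neg_div_mul_besselClifford_mul_besselClifford
          (by linarith : -1 < a) (t ^ 2) (-(p ^ 2)) hs
        simp only [F, integral_mul_const, hweber]
        rw [show -((1 - t ^ 2 + p ^ 2 - q ^ 2) * s) = (t ^ 2 + -p ^ 2) * s + -s + q ^ 2 * s by ring,
          Real.exp_add, Real.exp_add, show a + b = a + 1 + (b - 1) by ring,
          Real.rpow_add hs (a + 1),
          mul_neg, neg_mul]
        ring

theorem integral_besselWeight_mul_eq_integral_exp_neg_cos_mul {a b t ϑ φ p q : ℝ}
    (ha : -1 / 2 ≤ a) (hb : -1 / 2 ≤ b) (hab : -1 < a + b) (ht : t < 1)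
    (hpos : 0 < Real.cos ϑ + Real.cos φ)
    (hp : p = Real.sin ϑ / (Real.cos ϑ + Real.cos φ) * (1 - t))
    (hq : q = Real.sin φ / (Real.cos ϑ + Real.cos φ) * (1 - t)) (hq1 : q ^ 2 + 2 * |q| < 1)
    (htq : t ^ 2 + q ^ 2 < 1) :
    ∫ y in Ioi 0, besselWeight a b t y * (besselClifford a (-(p ^ 2 * y))
        * besselClifford b (-(q ^ 2 * y)))
      = ((Real.cos ϑ + Real.cos φ) / (2 * (1 - t))) ^ (a + b + 1)
        * ∫ w in Ioi 0, w ^ (a + b) * Real.exp (-((Real.cos φ + t * Real.cos ϑ) * w))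
          * (besselClifford a (-((t * w) ^ 2 * Real.sin ϑ ^ 2 / 4))
            * besselClifford b (-(w ^ 2 * Real.sin φ ^ 2 / 4))) := by
  have h1t : 0 < 1 - t := by linarith
  set S := Real.cos ϑ + Real.cos φ with hS
  have hτ : 0 < S / (2 * (1 - t)) := by positivity
  set τ := S / (2 * (1 - t)) with hτdef
  have hscale (f : ℝ → ℝ) := integral_comp_mul_left_Ioi' f 0 hτ
  simp only [mul_zero] at hscale
  rw [integral_besselWeight_mul_besselClifford_mul_besselClifford ha hb hab hq1 htq, ← hscale,
    smul_eq_mul, ← integral_const_mul, ← integral_const_mul]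
  have hpτ : p * τ = Real.sin ϑ / 2 := by rw [hp, hτdef]; field
  have hqτ : q * τ = Real.sin φ / 2 := by rw [hq, hτdef]; field
  have hrate : (1 - t ^ 2 + p ^ 2 - q ^ 2) * τ = Real.cos φ + t * Real.cos ϑ := by
    have hpq : p ^ 2 - q ^ 2 = (1 - t) ^ 2 * (Real.cos φ - Real.cos ϑ) / S := by
      rw [hp, hq, eq_div_iff hpos.ne']
      field_simp
      rw [Real.sin_sq, Real.sin_sq, hS]
      ring
    rw [add_sub_assoc, hpq, hτdef]
    field_simp
    rw [hS]
    ring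
  refine setIntegral_congr_fun measurableSet_Ioi fun w (hw : 0 < w) ↦ ?_
  rw [Real.mul_rpow hτ.le hw.le, ← mul_assoc _ τ, hrate, Real.rpow_add_one hτ.ne',
    show t ^ 2 * p ^ 2 * (τ * w) ^ 2 = t ^ 2 * w ^ 2 * (p * τ) ^ 2 by ring,
    show q ^ 2 * (τ * w) ^ 2 = w ^ 2 * (q * τ) ^ 2 by ring, hpτ, hqτ]
  ring_nf

end Reduction

section SmallAngle

theorem abs_expGegenbauer_cos_le {a : ℝ} (ha : -1 / 2 ≤ a) (n : ℕ) (ϑ : ℝ) :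
    |expGegenbauer a n (Real.cos ϑ)| ≤ (n.factorial * Real.Gamma (a + 1))⁻¹ := by
  have h := norm_expGegenbauer_cos_le ha n ϑ
  rw [← Complex.ofReal_cos, ← ofReal_expGegenbauer] at h
  simpa using h

theorem integral_Ioi_rpow_mul_exp_mul_pow_mul_expGegenbauer {a b c s t z : ℝ} {n : ℕ}
    (hb : -1 < b) (hab : a = b + n) (hbn : 0 < b + 1 / 2 + n) (hc : 0 < c) (hcs : c ^ 2 + s ^ 2 = 1)
    (hsc : s ^ 2 < c ^ 2) (j : ℕ) :
    ∫ w in Ioi 0, w ^ (a + b) * Real.exp (-(c * w)) * besselClifford b (-(w ^ 2 * s ^ 2 / 4))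
        * ((-(t * w)) ^ j * expGegenbauer a j z)
      = (-t) ^ j * ((n + j).factorial * Real.Gamma (2 * b + 1 + (n + j : ℕ)))
        * (expGegenbauer a j z * expGegenbauer b (n + j) c) := by
  have hlaplace := integral_Ioi_rpow_mul_exp_mul_besselClifford (k := n + j) hb
    (by push_cast; linarith [j.cast_nonneg (α := ℝ)]) hc hcs hsc
  calc _ = ∫ w in Ioi 0, (-t) ^ j * expGegenbauer a j z * (w ^ (2 * b + (n + j : ℕ))
        * Real.exp (-(c * w)) * besselClifford b (-(w ^ 2 * s ^ 2 / 4))) := by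
        refine setIntegral_congr_fun measurableSet_Ioi fun w (hw : 0 < w) ↦ ?_
        rw [show 2 * b + ((n + j : ℕ) : ℝ) = a + b + j by rw [hab]; push_cast; ring,
          Real.rpow_add_natCast hw.ne', show -(t * w) = -t * w by ring, mul_pow]
        ring
    _ = _ := by rw [integral_const_mul, hlaplace]; ring

theorem abs_rpow_mul_exp_mul_pow_mul_expGegenbauer_le {a b w : ℝ} (ha : -1 / 2 ≤ a)
    (hb : -1 / 2 ≤ b) (hw : 0 < w) (c s t ϑ : ℝ) (j : ℕ) :
    |w ^ (a + b) * Real.exp (-(c * w)) * besselClifford b (-(w ^ 2 * s ^ 2 / 4))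
        * ((-(t * w)) ^ j * expGegenbauer a j (Real.cos ϑ))|
      ≤ w ^ (a + b) * Real.exp (-(c * w)) * ((Real.Gamma (a + 1))⁻¹ * (Real.Gamma (b + 1))⁻¹)
        * ((|t| * w) ^ j / j.factorial) := by
  have hΓ : 0 < Real.Gamma (b + 1) := Real.Gamma_pos_of_pos (by linarith)
  have hG := abs_expGegenbauer_cos_le ha j ϑ
  have hE := abs_besselClifford_neg_le hb (by positivity : 0 ≤ w ^ 2 * s ^ 2 / 4)
  simp only [abs_mul, abs_pow, abs_neg, Real.abs_exp, abs_of_pos (Real.rpow_pos_of_pos hw _),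
    abs_of_pos hw]
  calc w ^ (a + b) * Real.exp (-(c * w)) * |besselClifford b (-(w ^ 2 * s ^ 2 / 4))|
        * ((|t| * w) ^ j * |expGegenbauer a j (Real.cos ϑ)|)
      ≤ w ^ (a + b) * Real.exp (-(c * w)) * (Real.Gamma (b + 1))⁻¹
        * ((|t| * w) ^ j * (j.factorial * Real.Gamma (a + 1))⁻¹) := by gcongr
    _ = _ := by rw [mul_inv]; ring

theorem hasSum_integral_exp_neg_cos_mul {a b c s t : ℝ} {n : ℕ} (ϑ : ℝ) (hb : -1 / 2 ≤ b)
    (hab : a = b + n) (habn : -1 < a + b) (hcs : c ^ 2 + s ^ 2 = 1) (hsc : s ^ 2 < c ^ 2)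
    (htc : |t| < c) :
    HasSum (fun j : ℕ ↦ (-t) ^ j * ((n + j).factorial * Real.Gamma (2 * b + 1 + (n + j : ℕ)))
        * (expGegenbauer a j (Real.cos ϑ) * expGegenbauer b (n + j) c))
      (∫ w in Ioi 0, w ^ (a + b) * Real.exp (-((c + t * Real.cos ϑ) * w))
        * (besselClifford a (-((t * w) ^ 2 * Real.sin ϑ ^ 2 / 4))
          * besselClifford b (-(w ^ 2 * s ^ 2 / 4)))) := by
  have ha : -1 / 2 ≤ a := by linarith [n.cast_nonneg (α := ℝ)]
  have hc : 0 < c := (abs_nonneg t).trans_lt htc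
  have hmeas := (continuous_besselClifford (𝕜 := ℝ) b).measurable
  have hexpand (w : ℝ) : HasSum (fun j : ℕ ↦ (-(t * w)) ^ j * expGegenbauer a j (Real.cos ϑ))
      (Real.exp (-(t * w) * Real.cos ϑ)
        * besselClifford a (-((t * w) ^ 2 * Real.sin ϑ ^ 2 / 4))) := by
    convert hasSum_pow_mul_expGegenbauer a (-(t * w)) (Real.cos ϑ) using 3
    rw [Real.sin_sq]; ring
  have hbound (w : ℝ) : HasSum (fun j : ℕ ↦ (|t| * w) ^ j / j.factorial) (Real.exp (|t| * w)) :=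
    hasSum_pow_div_factorial _
  have key := hasSum_integral_of_dominated_convergence (μ := volume.restrict (Ioi (0 : ℝ)))
    (F := fun (j : ℕ) w ↦ w ^ (a + b) * Real.exp (-(c * w))
      * besselClifford b (-(w ^ 2 * s ^ 2 / 4)) * ((-(t * w)) ^ j * expGegenbauer a j (Real.cos ϑ)))
    (f := fun w ↦ w ^ (a + b) * Real.exp (-((c + t * Real.cos ϑ) * w))
        * (besselClifford a (-((t * w) ^ 2 * Real.sin ϑ ^ 2 / 4))
          * besselClifford b (-(w ^ 2 * s ^ 2 / 4))))
    (bound := fun j w ↦ w ^ (a + b) * Real.exp (-(c * w))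
      * ((Real.Gamma (a + 1))⁻¹ * (Real.Gamma (b + 1))⁻¹) * ((|t| * w) ^ j / j.factorial))
    (fun j ↦ by fun_prop)
    (fun j ↦ (ae_restrict_mem measurableSet_Ioi).mono fun w (hw : 0 < w) ↦
      abs_rpow_mul_exp_mul_pow_mul_expGegenbauer_le ha hb hw c s t ϑ j)
    (Eventually.of_forall fun w ↦ (hbound w).summable.mul_left _) ?_
    (Eventually.of_forall fun w ↦ ?_)
  · simp only [integral_Ioi_rpow_mul_exp_mul_pow_mul_expGegenbauer (by linarith) hab (by linarith)
      hc hcs hsc] at key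
    exact key
  · simp only [tsum_mul_left, (hbound _).tsum_eq]
    refine (integrableOn_congr_fun (fun w _ ↦ ?_) measurableSet_Ioi).1
      ((integrableOn_Ioi_rpow_mul_exp_neg_mul habn (sub_pos.2 htc)).const_mul
        ((Real.Gamma (a + 1))⁻¹ * (Real.Gamma (b + 1))⁻¹))
    rw [show -((c - |t|) * w) = -(c * w) + |t| * w by ring, Real.exp_add]
    ring
  · rw [show -((c + t * Real.cos ϑ) * w) = -(c * w) + -(t * w) * Real.cos ϑ by ring, Real.exp_add,
      ← mul_assoc (w ^ (a + b)), mul_comm (besselClifford a _), mul_mul_mul_comm]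
    exact (hexpand w).mul_left _

end SmallAngle

section HolomorphicParameter

variable {ι E : Type*} [MeasurableSpace ι] {m : Measure ι} [NormedAddCommGroup E]
  [NormedSpace ℂ E] {F : ℂ → ι → E} {U : Set ℂ}

theorem aestronglyMeasurable_deriv_of_forall_aestronglyMeasurable {z : ℂ}
    (hF_meas : ∀ z, AEStronglyMeasurable (F z) m)
    (hF_diff : ∀ᵐ x ∂m, DifferentiableAt ℂ (F · x) z) :
    AEStronglyMeasurable (fun x ↦ deriv (F · x) z) m :=
  aestronglyMeasurable_of_tendsto_ae (f := fun w x ↦ slope (F · x) z w) (nhdsWithin z {z}ᶜ)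
    (fun w ↦ ((hF_meas w).sub (hF_meas z)).const_smul (w - z)⁻¹)
    (hF_diff.mono fun _ hx ↦ hasDerivAt_iff_tendsto_slope.1 hx.hasDerivAt)

theorem differentiableOn_integral_of_dominated (hU : IsOpen U)
    (hF_meas : ∀ z, AEStronglyMeasurable (F z) m)
    (hF_diff : ∀ᵐ x ∂m, DifferentiableOn ℂ (F · x) U) {bound : ι → ℝ}
    (hF_bound : ∀ᵐ x ∂m, ∀ z ∈ U, ‖F z x‖ ≤ bound x) (hbound : Integrable bound m) :
    DifferentiableOn ℂ (fun z ↦ ∫ x, F z x ∂m) U := by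
  intro w hw
  obtain ⟨ε, hε, hball⟩ := Metric.isOpen_iff.1 hU w hw
  have hsub : ∀ z ∈ ball w (ε / 2), closedBall z (ε / 4) ⊆ U := fun z hz ↦
    (closedBall_subset_ball' (by linarith [mem_ball.1 hz])).trans hball
  have hdiffAt : ∀ᵐ x ∂m, ∀ z ∈ U, DifferentiableAt ℂ (F · x) z :=
    hF_diff.mono fun x hx z hz ↦ hx.differentiableAt (hU.mem_nhds hz)
  have hcauchy : ∀ᵐ x ∂m, ∀ z ∈ ball w (ε / 2), ‖deriv (F · x) z‖ ≤ bound x / (ε / 4) := by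
    filter_upwards [hF_diff, hF_bound] with x hx hxb z hz
    exact Complex.norm_deriv_le_of_forall_mem_sphere_norm_le (by positivity)
      ((hx.mono (hsub z hz)).diffContOnCl_ball subset_rfl)
      fun y hy ↦ hxb y (hsub z hz (sphere_subset_closedBall hy))
  refine DifferentiableAt.differentiableWithinAt
    (hasDerivAt_integral_of_dominated_loc_of_deriv_le (F := F) (F' := fun z x ↦ deriv (F · x) z)
      (ball_mem_nhds w (half_pos hε)) (Eventually.of_forall hF_meas)
      (hbound.mono' (hF_meas w) (hF_bound.mono fun x hx ↦ hx w hw))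
      (aestronglyMeasurable_deriv_of_forall_aestronglyMeasurable hF_meas
        (hdiffAt.mono fun x hx ↦ hx w hw)) hcauchy (hbound.div_const _)
      (hdiffAt.mono fun x hx z hz ↦ ?_)).2.differentiableAt
  exact (hx z (hsub z hz (mem_closedBall_self (by positivity)))).hasDerivAt

end HolomorphicParameter

section WeightedIntegral

theorem continuousOn_besselWeight (a b t : ℝ) : ContinuousOn (besselWeight a b t) (Ioi 0) := by
  have hE := continuous_besselClifford (𝕜 := ℝ) a
  intro y (hy : 0 < y)
  exact (((Real.continuousAt_rpow_const y a (Or.inl hy.ne')).mul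
    (by fun_prop)).mul (hasDerivAt_macdonald b hy).continuousAt).continuousWithinAt

theorem besselWeight_nonneg {a : ℝ} (ha : -1 < a) (b t : ℝ) {y : ℝ} (hy : 0 ≤ y) :
    0 ≤ besselWeight a b t y :=
  mul_nonneg (mul_nonneg (Real.rpow_nonneg hy a) (besselClifford_pos ha (by positivity)).le)
    (macdonald_nonneg b y)

theorem besselWeight_le {a b r t η y : ℝ} (ha : -1 / 2 ≤ a) (hη : 0 < η) (hη1 : η ≤ 1)
    (hr : 0 ≤ r) (hrb : 0 < r + b) (hy : 0 < y) :
    besselWeight a b t y ≤ (Real.Gamma (a + 1))⁻¹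
      * ((r / η) ^ r * ((1 / η) ^ (r + b) * Real.Gamma (r + b)))
      * (y ^ (a - r) * Real.exp (2 * (|t| + η - 1) * √y)) := by
  have hE : besselClifford a (t ^ 2 * y) ≤ Real.exp (2 * (|t| * √y)) / Real.Gamma (a + 1) := by
    have h := besselClifford_sq_le ha (t * √y)
    rwa [mul_pow, Real.sq_sqrt hy.le, abs_mul, abs_of_nonneg (Real.sqrt_nonneg y)] at h
  have hΓ : 0 < Real.Gamma (a + 1) := Real.Gamma_pos_of_pos (by linarith)
  calc besselWeight a b t y
      ≤ y ^ a * (Real.exp (2 * (|t| * √y)) / Real.Gamma (a + 1))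
        * ((r / (η * y)) ^ r * Real.exp (-(2 * (1 - η) * √y))
          * ((1 / η) ^ (r + b) * Real.Gamma (r + b))) := by
        unfold besselWeight
        gcongr
        · exact macdonald_nonneg b y
        · exact macdonald_le hη hη1 hr hrb hy
    _ = _ := by
        rw [← div_div r, Real.div_rpow (by positivity) hy.le, Real.rpow_sub hy,
          show 2 * (|t| + η - 1) * √y = 2 * (|t| * √y) + -(2 * (1 - η) * √y) by ring, Real.exp_add]
        ring

theorem integrableOn_besselWeight_mul_exp {a b c t : ℝ} (ha : -1 / 2 ≤ a) (hab : -1 < a + b)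
    (hc : 0 ≤ c) (htc : |t| + c < 1) :
    IntegrableOn (fun y ↦ besselWeight a b t y * Real.exp (2 * c * √y)) (Ioi 0) := by
  obtain ⟨r, hr, hra⟩ : ∃ r, max 0 (-b) < r ∧ r < a + 1 :=
    exists_between (max_lt (by linarith) (by linarith))
  obtain ⟨hr0, hrb⟩ := max_lt_iff.1 hr
  set η := (1 - |t| - c) / 2 with hη
  have hη0 : 0 < η := by linarith
  have hη1 : η ≤ 1 := by linarith [abs_nonneg t]
  have hdom := (integrableOn_rpow_mul_exp_neg_mul_rpow (s := a - r) (p := 1 / 2) (b := 2 * η)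
    (by linarith) (by norm_num) (by positivity)).const_mul ((Real.Gamma (a + 1))⁻¹
      * ((r / η) ^ r * ((1 / η) ^ (r + b) * Real.Gamma (r + b))))
  refine hdom.mono' (((continuousOn_besselWeight a b t).mul
    (by fun_prop)).aestronglyMeasurable measurableSet_Ioi)
    ((ae_restrict_mem measurableSet_Ioi).mono fun y (hy : 0 < y) ↦ ?_)
  rw [Real.norm_of_nonneg (mul_nonneg (besselWeight_nonneg (by linarith) b t hy.le)
    (Real.exp_pos _).le)]
  refine (mul_le_mul_of_nonneg_right (besselWeight_le ha hη0 hη1 hr0.le (by linarith) hy)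
    (Real.exp_pos _).le).trans_eq ?_
  rw [mul_assoc, mul_assoc (y ^ (a - r)), ← Real.exp_add, ← Real.sqrt_eq_rpow,
    show 2 * (|t| + η - 1) * √y + 2 * c * √y = -(2 * η) * √y by rw [hη]; ring]

theorem norm_besselClifford_neg_sq_mul_le {a y : ℝ} (ha : -1 / 2 ≤ a) (hy : 0 ≤ y) (z : ℂ) :
    ‖besselClifford a (-(z ^ 2 * y))‖ ≤ Real.exp (2 * |z.im| * √y) / Real.Gamma (a + 1) := by
  have h := norm_besselClifford_neg_sq_div_four_le ha (z * (2 * √y : ℝ))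
  rw [Complex.im_mul_ofReal, abs_mul, abs_of_nonneg (by positivity : 0 ≤ 2 * √y)] at h
  convert h using 3
  · rw [mul_pow, ← Complex.ofReal_pow, mul_pow, Real.sq_sqrt hy]
    push_cast
    ring
  · ring

theorem norm_besselWeight_mul_le {a b y : ℝ} (ha : -1 / 2 ≤ a) (hb : -1 / 2 ≤ b) (t : ℝ)
    (hy : 0 ≤ y) (p q : ℂ) :
    ‖(besselWeight a b t y : ℂ) * (besselClifford a (-(p ^ 2 * y))
        * besselClifford b (-(q ^ 2 * y)))‖
      ≤ (Real.Gamma (a + 1))⁻¹ * (Real.Gamma (b + 1))⁻¹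
        * (besselWeight a b t y * Real.exp (2 * (|p.im| + |q.im|) * √y)) := by
  have hΓ : 0 < Real.Gamma (a + 1) := Real.Gamma_pos_of_pos (by linarith)
  have hW := besselWeight_nonneg (by linarith : -1 < a) b t hy
  rw [norm_mul, norm_mul, Complex.norm_real, Real.norm_of_nonneg hW]
  calc besselWeight a b t y * (‖besselClifford a (-(p ^ 2 * y))‖
        * ‖besselClifford b (-(q ^ 2 * y))‖)
      ≤ besselWeight a b t y * (Real.exp (2 * |p.im| * √y) / Real.Gamma (a + 1)
        * (Real.exp (2 * |q.im| * √y) / Real.Gamma (b + 1))) := by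
        gcongr
        exacts [norm_besselClifford_neg_sq_mul_le ha hy p,
          norm_besselClifford_neg_sq_mul_le hb hy q]
    _ = _ := by
        rw [mul_add, add_mul, Real.exp_add]
        ring

theorem analyticAt_integral_besselWeight_mul {a b t : ℝ} {P Q : ℂ → ℂ} {z₀ : ℂ}
    (ha : -1 / 2 ≤ a) (hb : -1 / 2 ≤ b) (hab : -1 < a + b) (hP : AnalyticAt ℂ P z₀)
    (hQ : AnalyticAt ℂ Q z₀) (ht : |t| + (|(P z₀).im| + |(Q z₀).im|) < 1) :
    AnalyticAt ℂ (fun z ↦ ∫ y in Ioi 0, (besselWeight a b t y : ℂ)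
      * (besselClifford a (-(P z ^ 2 * y)) * besselClifford b (-(Q z ^ 2 * y)))) z₀ := by
  obtain ⟨c, hcPQ, htc⟩ := exists_between (lt_sub_iff_add_lt'.2 ht)
  have hc : 0 ≤ c := (by positivity : 0 ≤ |(P z₀).im| + |(Q z₀).im|).trans hcPQ.le
  have him : ∀ᶠ z in nhds z₀, |(P z).im| + |(Q z).im| < c :=
    ContinuousAt.eventually_lt (((Complex.continuous_im.continuousAt.comp hP.continuousAt).abs).add
      (Complex.continuous_im.continuousAt.comp hQ.continuousAt).abs) continuousAt_const hcPQ
  obtain ⟨U, hmem, hU, hz₀⟩ := _root_.eventually_nhds_iff.1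
    (him.and (hP.eventually_analyticAt.and hQ.eventually_analyticAt))
  refine (differentiableOn_integral_of_dominated hU (bound := fun y ↦ (Real.Gamma (a + 1))⁻¹
    * (Real.Gamma (b + 1))⁻¹ * (besselWeight a b t y * Real.exp (2 * c * √y)))
    (fun z ↦ ?_) (Eventually.of_forall fun y z hz ↦ ?_)
    ((ae_restrict_mem measurableSet_Ioi).mono fun y (hy : 0 < y) z hz ↦ ?_)
    ((integrableOn_besselWeight_mul_exp ha hab hc (lt_sub_iff_add_lt'.1 htc)).const_mul
      _)).analyticAt (hU.mem_nhds hz₀)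
  · have hEa := continuous_besselClifford (𝕜 := ℂ) a
    have hEb := continuous_besselClifford (𝕜 := ℂ) b
    exact ((Complex.continuous_ofReal.comp_continuousOn (continuousOn_besselWeight a b t)).mul
      (by fun_prop)).aestronglyMeasurable measurableSet_Ioi
  · obtain ⟨-, hPz, hQz⟩ := hmem z hz
    have hPd := hPz.differentiableAt
    have hQd := hQz.differentiableAt
    have hEa := differentiable_besselClifford (𝕜 := ℂ) a
    have hEb := differentiable_besselClifford (𝕜 := ℂ) b
    exact DifferentiableAt.differentiableWithinAt (by fun_prop)
  · have hW := besselWeight_nonneg (by linarith : -1 < a) b t hy.le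
    refine (norm_besselWeight_mul_le ha hb t hy.le (P z) (Q z)).trans ?_
    have hΓa : 0 < Real.Gamma (a + 1) := Real.Gamma_pos_of_pos (by linarith)
    have hΓb : 0 < Real.Gamma (b + 1) := Real.Gamma_pos_of_pos (by linarith)
    gcongr
    exact (hmem z hz).1.le

end WeightedIntegral

/-! ### Analytic continuation in the angle -/

section AngleContinuation

theorem norm_mul_expGegenbauer_cos_le {b ε : ℝ} {z : ℂ} (hb : -1 / 2 ≤ b) (c : ℝ) (k : ℕ)
    (hz : |z.im| ≤ ε) :
    ‖(c : ℂ) * expGegenbauer b k (Complex.cos z)‖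
      ≤ |c| * Real.exp (k * ε) / k.factorial * (Real.Gamma (b + 1))⁻¹ := by
  have hΓ : 0 < Real.Gamma (b + 1) := Real.Gamma_pos_of_pos (by linarith)
  rw [norm_mul, Complex.norm_real, Real.norm_eq_abs]
  calc |c| * ‖expGegenbauer b k (Complex.cos z)‖
      ≤ |c| * (Real.exp (k * |z.im|) / (k.factorial * Real.Gamma (b + 1))) := by
        gcongr
        exact norm_expGegenbauer_cos_le hb k z
    _ ≤ |c| * (Real.exp (k * ε) / (k.factorial * Real.Gamma (b + 1))) := by gcongr
    _ = _ := by ring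

theorem summable_mul_expGegenbauer_cos {b ε : ℝ} {c : ℕ → ℝ} {k : ℕ → ℕ} (hb : -1 / 2 ≤ b)
    (hε : 0 ≤ ε) (hc : Summable fun j ↦ |c j| * Real.exp (k j * ε) / (k j).factorial) (φ : ℝ) :
    Summable fun j ↦ c j * expGegenbauer b (k j) (Real.cos φ) := by
  refine (hc.mul_right (Real.Gamma (b + 1))⁻¹).of_norm_bounded fun j ↦ ?_
  have h := norm_mul_expGegenbauer_cos_le hb (c j) (k j) (by simpa using hε : |(φ : ℂ).im| ≤ ε)
  rwa [← Complex.ofReal_cos, ← ofReal_expGegenbauer, ← Complex.ofReal_mul,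
    Complex.norm_real] at h

theorem analyticAt_tsum_mul_expGegenbauer_cos {b ε : ℝ} {c : ℕ → ℝ} {k : ℕ → ℕ}
    (hb : -1 / 2 ≤ b) (hε : 0 < ε)
    (hc : Summable fun j ↦ |c j| * Real.exp (k j * ε) / (k j).factorial) (φ : ℝ) :
    AnalyticAt ℝ (fun φ : ℝ ↦ ∑' j, c j * expGegenbauer b (k j) (Real.cos φ)) φ := by
  have hU : IsOpen {z : ℂ | |z.im| < ε} :=
    isOpen_lt (continuous_abs.comp Complex.continuous_im) continuous_const
  have hstrip : DifferentiableOn ℂ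
      (fun z ↦ ∑' j, (c j : ℂ) * expGegenbauer b (k j) (Complex.cos z)) {z : ℂ | |z.im| < ε} :=
    Complex.differentiableOn_tsum_of_summable_norm (hc.mul_right (Real.Gamma (b + 1))⁻¹)
      (fun j ↦ (((differentiable_expGegenbauer b (k j)).comp
        Complex.differentiable_cos).const_mul _).differentiableOn)
      hU fun j z hz ↦ norm_mul_expGegenbauer_cos_le hb (c j) (k j) hz.le
  have hφ : (φ : ℂ) ∈ {z : ℂ | |z.im| < ε} := by simpa using hε
  refine (hstrip.analyticAt (hU.mem_nhds hφ)).re_ofReal.congr (Eventually.of_forall fun y ↦ ?_)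
  simp only [← Complex.ofReal_cos, ← ofReal_expGegenbauer, ← Complex.ofReal_mul,
    ← Complex.ofReal_tsum, Complex.ofReal_re]

theorem exists_mul_exp_lt_one {r : ℝ} (hr : r < 1) : ∃ ε > 0, r * Real.exp ε < 1 := by
  have hlim : ∀ᶠ ε in nhdsWithin (0 : ℝ) (Ioi 0), r * Real.exp ε < 1 :=
    nhdsWithin_le_nhds (ContinuousAt.eventually_lt (by fun_prop) continuousAt_const (by simpa))
  exact (hlim.and self_mem_nhdsWithin).exists.imp fun ε h ↦ ⟨h.2, h.1⟩

/-- The coefficient of `expGegenbauer b (n + j) (cos φ)` in the expansion in `φ`. -/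
noncomputable def angleCoeff (a b : ℝ) (n : ℕ) (t ϑ : ℝ) (j : ℕ) : ℝ :=
  (-t) ^ j * ((n + j).factorial * Real.Gamma (2 * b + 1 + (n + j : ℕ)))
    * expGegenbauer a j (Real.cos ϑ)

theorem abs_angleCoeff_le {a b : ℝ} {n : ℕ} (ha : -1 / 2 ≤ a) (hbn : 0 < 2 * b + 1 + n)
    (t ϑ : ℝ) (j : ℕ) :
    |angleCoeff a b n t ϑ j| ≤ |t| ^ j * (n + j).factorial
      * (Real.Gamma (2 * b + 1 + n + j) / j.factorial) * (Real.Gamma (a + 1))⁻¹ := by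
  have hΓ : 0 < Real.Gamma (2 * b + 1 + n + j) := Real.Gamma_pos_of_pos (by positivity)
  rw [angleCoeff, Nat.cast_add, ← add_assoc, abs_mul, abs_mul, abs_mul, abs_pow, abs_neg,
    abs_of_pos hΓ, Nat.abs_cast]
  calc |t| ^ j * ((n + j).factorial * Real.Gamma (2 * b + 1 + n + j))
        * |expGegenbauer a j (Real.cos ϑ)|
      ≤ |t| ^ j * ((n + j).factorial * Real.Gamma (2 * b + 1 + n + j))
        * (j.factorial * Real.Gamma (a + 1))⁻¹ := by
        gcongr
        exact abs_expGegenbauer_cos_le ha j ϑ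
    _ = _ := by rw [mul_inv]; ring

theorem summable_abs_angleCoeff_mul_exp {a b t ε : ℝ} {n : ℕ} (ha : -1 / 2 ≤ a)
    (hbn : 0 < 2 * b + 1 + n) (ht : |t| * Real.exp ε < 1) (ϑ : ℝ) :
    Summable fun j : ℕ ↦ |angleCoeff a b n t ϑ j| * Real.exp ((n + j : ℕ) * ε)
      / (n + j).factorial := by
  have hgeom := (hasSum_Gamma_div_factorial_mul_pow hbn (z := |t| * Real.exp ε)
    (by rwa [abs_of_nonneg (by positivity)])).summable.mul_left
      ((Real.Gamma (a + 1))⁻¹ * Real.exp (n * ε))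
  refine hgeom.of_nonneg_of_le (fun j ↦ by positivity) fun j ↦ ?_
  calc |angleCoeff a b n t ϑ j| * Real.exp ((n + j : ℕ) * ε) / (n + j).factorial
      ≤ |t| ^ j * (n + j).factorial * (Real.Gamma (2 * b + 1 + n + j) / j.factorial)
        * (Real.Gamma (a + 1))⁻¹ * Real.exp ((n + j : ℕ) * ε) / (n + j).factorial := by
        gcongr
        exact abs_angleCoeff_le ha hbn t ϑ j
    _ = _ := by
        rw [Nat.cast_add, add_mul, Real.exp_add, mul_pow, ← Real.exp_nat_mul]
        field_simp

theorem analyticAt_integral_besselWeight_mul_ofReal {a b t : ℝ} {P Q : ℂ → ℂ} {p q : ℝ → ℝ}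
    {x : ℝ} (ha : -1 / 2 ≤ a) (hb : -1 / 2 ≤ b) (hab : -1 < a + b) (ht : |t| < 1)
    (hP : AnalyticAt ℂ P x) (hQ : AnalyticAt ℂ Q x) (hPp : ∀ y : ℝ, P y = p y)
    (hQq : ∀ y : ℝ, Q y = q y) :
    AnalyticAt ℝ (fun x ↦ ∫ y in Ioi 0, besselWeight a b t y
      * (besselClifford a (-(p x ^ 2 * y)) * besselClifford b (-(q x ^ 2 * y)))) x := by
  refine (analyticAt_integral_besselWeight_mul ha hb hab hP hQ
    (by simpa [hPp, hQq] using ht)).re_ofReal.congr (Eventually.of_forall fun x ↦ ?_)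
  simp only [hPp, hQq]
  simp only [← Complex.ofReal_pow, ← Complex.ofReal_mul, ← Complex.ofReal_neg,
    ← ofReal_besselClifford, integral_complex_ofReal, Complex.ofReal_re]

/-- The integral of `besselWeight` against the two Bessel functions at the angles `ϑ` and `φ`: up to
elementary factors the integral `I_{μ,ν}(t,ϑ,φ)`, for `μ = 2a` and `ν = 2b`. -/
noncomputable def angleIntegral (a b t ϑ φ : ℝ) : ℝ :=
  ∫ y in Ioi 0, besselWeight a b t y
    * (besselClifford a (-((Real.sin ϑ / (Real.cos ϑ + Real.cos φ) * (1 - t)) ^ 2 * y))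
      * besselClifford b (-((Real.sin φ / (Real.cos ϑ + Real.cos φ) * (1 - t)) ^ 2 * y)))

theorem analyticAt_angleIntegral {a b t ϑ φ : ℝ} (ha : -1 / 2 ≤ a)
    (hb : -1 / 2 ≤ b) (hab : -1 < a + b) (ht : |t| < 1) (hpos : 0 < Real.cos ϑ + Real.cos φ) :
    AnalyticAt ℝ (angleIntegral a b t ϑ) φ := by
  have hne : (Real.cos ϑ : ℂ) + Complex.cos φ ≠ 0 := by exact_mod_cast hpos.ne'
  have hsum : AnalyticAt ℂ (fun z ↦ (Real.cos ϑ : ℂ) + Complex.cos z) φ :=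
    analyticAt_const.add Complex.analyticAt_cos
  exact analyticAt_integral_besselWeight_mul_ofReal ha hb hab ht
    ((analyticAt_const.div hsum hne).mul analyticAt_const)
    ((Complex.analyticAt_sin.div hsum hne).mul analyticAt_const)
    (P := fun z ↦ (Real.sin ϑ : ℂ) / ((Real.cos ϑ : ℂ) + Complex.cos z) * (1 - t : ℝ))
    (Q := fun z ↦ Complex.sin z / ((Real.cos ϑ : ℂ) + Complex.cos z) * (1 - t : ℝ))
    (fun y ↦ by push_cast; rfl) (fun y ↦ by push_cast; rfl)

theorem analyticAt_rpow_cos_add_cos {ϑ φ : ℝ} {d : ℝ} (hd : 0 < d)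
    (hpos : 0 < Real.cos ϑ + Real.cos φ) (r : ℝ) :
    AnalyticAt ℝ (fun φ ↦ ((Real.cos ϑ + Real.cos φ) / d) ^ r) φ := by
  have hsum : AnalyticAt ℝ (fun φ ↦ (Real.cos ϑ + Real.cos φ) / d) φ :=
    (analyticAt_const.add Real.analyticAt_cos).div_const
  have hpos' : 0 < (Real.cos ϑ + Real.cos φ) / d := div_pos hpos hd
  refine ((hsum.log hpos').mul (analyticAt_const (v := r))).rexp.congr ?_
  filter_upwards [continuousAt_const.eventually_lt hsum.continuousAt hpos'] with y hy
  exact (Real.rpow_def_of_pos hy r).symm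

theorem angleIntegral_eventuallyEq_zero {a b t ϑ : ℝ} {n : ℕ} (hb : -1 / 2 ≤ b)
    (hab : a = b + n) (habn : -1 < a + b) (ht : |t| < 1) (hpos : 0 < Real.cos ϑ + 1) :
    angleIntegral a b t ϑ =ᶠ[nhds 0] fun φ ↦
      ((Real.cos ϑ + Real.cos φ) / (2 * (1 - t))) ^ (a + b + 1)
        * ∑' j, angleCoeff a b n t ϑ j * expGegenbauer b (n + j) (Real.cos φ) := by
  have ha : -1 / 2 ≤ a := by linarith [n.cast_nonneg (α := ℝ)]
  have hq : ContinuousAt (fun φ ↦ Real.sin φ / (Real.cos ϑ + Real.cos φ) * (1 - t)) 0 :=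
    (Real.continuous_sin.continuousAt.div (by fun_prop) (by simpa using hpos.ne')).mul
      continuousAt_const
  have hcos : ∀ᶠ φ in nhds (0 : ℝ), 0 < Real.cos ϑ + Real.cos φ :=
    ContinuousAt.eventually_lt continuousAt_const (by fun_prop) (by simpa)
  have hq1 : ∀ᶠ φ in nhds (0 : ℝ), (Real.sin φ / (Real.cos ϑ + Real.cos φ) * (1 - t)) ^ 2
      + 2 * |Real.sin φ / (Real.cos ϑ + Real.cos φ) * (1 - t)| < 1 :=
    ((hq.pow 2).add (continuousAt_const.mul hq.abs)).eventually_lt continuousAt_const (by simp)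
  have htq : ∀ᶠ φ in nhds (0 : ℝ),
      t ^ 2 + (Real.sin φ / (Real.cos ϑ + Real.cos φ) * (1 - t)) ^ 2 < 1 :=
    (continuousAt_const.add (hq.pow 2)).eventually_lt continuousAt_const (by simpa)
  have hsc : ∀ᶠ φ in nhds (0 : ℝ), Real.sin φ ^ 2 < Real.cos φ ^ 2 :=
    ContinuousAt.eventually_lt (by fun_prop) (by fun_prop) (by simp)
  have htc : ∀ᶠ φ in nhds (0 : ℝ), |t| < Real.cos φ :=
    ContinuousAt.eventually_lt continuousAt_const (by fun_prop) (by simpa)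
  filter_upwards [hcos, hq1, htq, hsc, htc] with φ hcos hq1 htq hsc htc
  rw [angleIntegral, integral_besselWeight_mul_eq_integral_exp_neg_cos_mul ha hb habn
    (abs_lt.1 ht).2 hcos rfl rfl hq1 htq,
    ← (hasSum_integral_exp_neg_cos_mul ϑ hb hab habn (Real.cos_sq_add_sin_sq φ) hsc htc).tsum_eq]
  simp only [angleCoeff, mul_assoc]

theorem hasSum_angleCoeff_mul_expGegenbauer {a b t ϑ φ : ℝ} {n : ℕ} (hb : -1 / 2 ≤ b)
    (hab : a = b + n) (habn : -1 < a + b) (ht : |t| < 1) (hφ : φ ∈ Icc 0 π)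
    (hpos : 0 < Real.cos ϑ + Real.cos φ) :
    HasSum (fun j ↦ angleCoeff a b n t ϑ j * expGegenbauer b (n + j) (Real.cos φ))
      (((Real.cos ϑ + Real.cos φ) / (2 * (1 - t))) ^ (-(a + b + 1)) * angleIntegral a b t ϑ φ) := by
  have ha : -1 / 2 ≤ a := by linarith [n.cast_nonneg (α := ℝ)]
  have h2t : 0 < 2 * (1 - t) := by linarith [(abs_lt.1 ht).2]
  have hcos {y : ℝ} (hy : y ∈ Icc 0 φ) : 0 < Real.cos ϑ + Real.cos y := by
    linarith [Real.cos_le_cos_of_nonneg_of_le_pi hy.1 hφ.2 hy.2]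
  obtain ⟨ε, hε, htε⟩ := exists_mul_exp_lt_one ht
  have hsum := summable_abs_angleCoeff_mul_exp (b := b) (n := n) ha (by linarith) htε ϑ
  have heqOn : EqOn (angleIntegral a b t ϑ)
      (fun φ ↦ ((Real.cos ϑ + Real.cos φ) / (2 * (1 - t))) ^ (a + b + 1)
        * ∑' j, angleCoeff a b n t ϑ j * expGegenbauer b (n + j) (Real.cos φ)) (Icc 0 φ) :=
    AnalyticOnNhd.eqOn_of_preconnected_of_eventuallyEq
      (fun y hy ↦ analyticAt_angleIntegral ha hb habn ht (hcos hy))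
      (fun y hy ↦ (analyticAt_rpow_cos_add_cos h2t (hcos hy) _).mul
        (analyticAt_tsum_mul_expGegenbauer_cos hb hε hsum y))
      isPreconnected_Icc (left_mem_Icc.2 hφ.1)
      (angleIntegral_eventuallyEq_zero hb hab habn ht (by simpa using hcos (left_mem_Icc.2 hφ.1)))
  rw [heqOn (right_mem_Icc.2 hφ.1), ← mul_assoc, ← Real.rpow_add (div_pos hpos h2t), neg_add_cancel,
    Real.rpow_zero, one_mul]
  exact (summable_mul_expGegenbauer_cos hb hε.le hsum φ).hasSum

end AngleContinuation

section Expansion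

theorem mul_angleCoeff_mul_expGegenbauer_eq {a b : ℝ} {n : ℕ} (ha : -1 / 2 < a) (hb : -1 < b)
    (hbn : 0 < b + 1 / 2 + n) (t ϑ x : ℝ) (j : ℕ) :
    4 ^ (a + b) * (angleCoeff a b n t ϑ j * expGegenbauer b (n + j) x)
      = 4 ^ (2 * (a + b)) / π * (-1) ^ j * ((n + j).factorial / Real.Gamma (2 * a + 1 + j))
        * gegenbauerCt j (a + 1 / 2) (Real.cos ϑ) * gegenbauerCt (n + j) (b + 1 / 2) x * t ^ j := by
  have _ := j.cast_nonneg (α := ℝ)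
  have hΓ : Real.Gamma (2 * a + 1 + j) ≠ 0 := (Real.Gamma_pos_of_pos (by linarith)).ne'
  have hGa := gegenbauerCt_add_half (a := a) (n := j) (by linarith) (by linarith) (Real.cos ϑ)
  have hGb := gegenbauerCt_add_half (n := n + j) hb (by push_cast; linarith) x
  calc _ = 4 ^ (a + b) * (-1) ^ j * t ^ j * ((n + j).factorial / Real.Gamma (2 * a + 1 + j))
        * (Real.Gamma (2 * a + 1 + j) * expGegenbauer a j (Real.cos ϑ))
        * (Real.Gamma (2 * b + 1 + (n + j : ℕ)) * expGegenbauer b (n + j) x) := by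
        rw [angleCoeff, neg_pow]
        field
    _ = 4 ^ (a + b) * (-1) ^ j * t ^ j * ((n + j).factorial / Real.Gamma (2 * a + 1 + j))
        * (gegenbauerCt j (a + 1 / 2) (Real.cos ϑ) * gegenbauerCt (n + j) (b + 1 / 2) x)
        * (4 ^ a / √π * (4 ^ b / √π)) := by
        rw [← hGa, ← hGb]
        ring
    _ = _ := by
        rw [div_mul_div_comm, Real.mul_self_sqrt pi_pos.le, ← Real.rpow_add four_pos,
          two_mul (a + b), Real.rpow_add four_pos (a + b)]
        ring

theorem integral_besselIt_mul_besselKt_eq_angleIntegral (a b ϑ φ : ℝ) {t : ℝ} (ht : t < 1)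
    (hpos : 0 < Real.cos ϑ + Real.cos φ) :
    (1 - t) ^ (-(a + b + 1)) * ((Real.cos ϑ + Real.cos φ) / 2) ^ (-(a + b + 1))
      * ∫ x in Ioi 0, besselIt a (t * x / (1 - t)) * besselKt b (x / (1 - t))
        * besselJt a (Real.sin ϑ / (Real.cos ϑ + Real.cos φ) * x)
        * besselJt b (Real.sin φ / (Real.cos ϑ + Real.cos φ) * x) * x ^ (2 * (a + b) + 1)
      = 4 ^ (a + b) * (((Real.cos ϑ + Real.cos φ) / (2 * (1 - t))) ^ (-(a + b + 1))
        * angleIntegral a b t ϑ φ) := by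
  have h1t : 0 < 1 - t := sub_pos.2 ht
  rw [integral_besselIt_mul_besselKt_mul_besselJt_mul_besselJt a b _ _ ht, ← angleIntegral,
    ← div_div, Real.div_rpow (by positivity) h1t.le, two_mul, Real.rpow_add h1t,
    Real.rpow_neg h1t.le]
  have := Real.rpow_pos_of_pos h1t (a + b + 1)
  field

theorem genFun_gegenbauer_expansion_general {μ ν : ℝ} {n : ℕ} (hμ : μ = ν + 2 * n) (hν : -1 ≤ ν)
    (hμν : -2 < μ + ν) {ϑ φ : ℝ} (hφ : φ ∈ Icc 0 π) (hpos : 0 < Real.cos ϑ + Real.cos φ)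
    {t : ℝ} (ht : |t| < 1) :
    HasSum
      (fun j : ℕ ↦ (2 : ℝ) ^ (2 * (μ + ν)) / π * (-1) ^ j
        * (Real.Gamma (j + (μ - ν + 2) / 2) / Real.Gamma (j + μ + 1))
        * gegenbauerCt j ((μ + 1) / 2) (Real.cos ϑ)
        * gegenbauerCt (j + n) ((ν + 1) / 2) (Real.cos φ) * t ^ j)
      ((1 - t) ^ (-(μ + ν + 2) / 2) * ((Real.cos ϑ + Real.cos φ) / 2) ^ (-(μ + ν + 2) / 2)
        * ∫ x in Ioi 0, besselIt (μ / 2) (t * x / (1 - t)) * besselKt (ν / 2) (x / (1 - t))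
          * besselJt (μ / 2) (Real.sin ϑ / (Real.cos ϑ + Real.cos φ) * x)
          * besselJt (ν / 2) (Real.sin φ / (Real.cos ϑ + Real.cos φ) * x) * x ^ (μ + ν + 1)) := by
  have _ := n.cast_nonneg (α := ℝ)
  have hpow : (2 : ℝ) ^ (2 * (μ + ν)) = 4 ^ (2 * (μ / 2 + ν / 2)) := by
    rw [show 2 * (μ / 2 + ν / 2) = μ + ν by ring, Real.rpow_mul two_pos.le]
    norm_num
  have key := (hasSum_angleCoeff_mul_expGegenbauer (a := μ / 2) (b := ν / 2) (n := n)
    (by linarith) (by linarith) (by linarith) ht hφ hpos).mul_left (4 ^ (μ / 2 + ν / 2))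
  rw [← integral_besselIt_mul_besselKt_eq_angleIntegral _ _ _ _ (abs_lt.1 ht).2 hpos,
    show 2 * (μ / 2 + ν / 2) + 1 = μ + ν + 1 by ring,
    show -(μ / 2 + ν / 2 + 1) = -(μ + ν + 2) / 2 by ring] at key
  refine key.congr_fun fun j ↦ ?_
  have hΓ : Real.Gamma (j + (μ - ν + 2) / 2) = (n + j).factorial := by
    rw [← Real.Gamma_nat_eq_factorial, hμ]
    congr 1
    push_cast
    ring
  rw [mul_angleCoeff_mul_expGegenbauer_eq (by linarith) (by linarith) (by linarith), hpow, hΓ,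
    add_comm j n]
  ring_nf

end Expansion

namespace IntCond

variable {μ ν : ℤ}

theorem cast_eq (h : IntCond μ ν) : (μ : ℝ) = ν + 2 * ((μ - ν) / 2).toNat := by
  obtain ⟨-, hνμ, ⟨k, hk⟩, -⟩ := h
  have hμ : μ = ν + 2 * (((μ - ν) / 2).toNat : ℤ) := by omega
  exact_mod_cast hμ

theorem neg_two_lt_cast_add_cast (h : IntCond μ ν) : (-2 : ℝ) < μ + ν := by
  obtain ⟨hν, hνμ, -, hne⟩ := h
  exact_mod_cast (by omega : -2 < μ + ν)

end IntCond

/-- **Corollary 4.2.** Integral formula for the generating function: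
the series `Σ_j (2^{2(μ+ν)}/π)(−1)^j (Γ(j+(μ−ν+2)/2)/Γ(j+μ+1)) C̃_j^{(μ+1)/2}(cos ϑ)
C̃_{j+(μ−ν)/2}^{(ν+1)/2}(cos φ) t^j` converges to
`(1−t)^{−(μ+ν+2)/2} ((cos ϑ + cos φ)/2)^{−(μ+ν+2)/2} I_{μ,ν}(t,ϑ,φ)`. -/
theorem genFun_gegenbauer_expansion (μ ν : ℤ) (hcond : IntCond μ ν)
    (ϑ φ : ℝ) (hϑ : ϑ ∈ Set.Icc (0 : ℝ) Real.pi) (hφ : φ ∈ Set.Icc (0 : ℝ) Real.pi)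
    (hpos : Real.cos ϑ + Real.cos φ > 0) (t : ℝ) (ht : t ∈ Set.Ioo (-1 : ℝ) 1) :
    HasSum
      (fun j : ℕ =>
        (2 : ℝ) ^ (2 * ((μ : ℝ) + ν)) / Real.pi * (-1) ^ j
          * (Real.Gamma (j + ((μ : ℝ) - ν + 2) / 2) / Real.Gamma (j + (μ : ℝ) + 1))
          * gegenbauerCt j (((μ : ℝ) + 1) / 2) (Real.cos ϑ)
          * gegenbauerCt (j + ((μ - ν) / 2).toNat) (((ν : ℝ) + 1) / 2) (Real.cos φ) * t ^ j)
      ((1 - t) ^ (-((μ : ℝ) + ν + 2) / 2)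
        * ((Real.cos ϑ + Real.cos φ) / 2) ^ (-((μ : ℝ) + ν + 2) / 2)
        * ∫ x in Set.Ioi (0 : ℝ),
            besselIt ((μ : ℝ) / 2) (t * x / (1 - t)) * besselKt ((ν : ℝ) / 2) (x / (1 - t))
              * besselJt ((μ : ℝ) / 2) (Real.sin ϑ / (Real.cos ϑ + Real.cos φ) * x)
              * besselJt ((ν : ℝ) / 2) (Real.sin φ / (Real.cos ϑ + Real.cos φ) * x)
              * x ^ ((μ : ℝ) + ν + 1)) := by
  exact_mod_cast genFun_gegenbauer_expansion_general hcond.cast_eq (by exact_mod_cast hcond.1)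
    hcond.neg_two_lt_cast_add_cast hφ hpos (abs_lt.2 ht)
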